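/- arXiv:1503.05863 — 2 statements merged into one kernel-verified Lean document; each statement's English description precedes it below -/
import Mathlib

section
/- Let d ≥ 1. For every real m ≥ 0 there exist a natural number m′, a natural number M ≥ 2, and for every δ > 0 and B > 0 a constant C > 0 with the following property. Let Φ : ℝ^d × ℝ^d → ℝ be a smooth real-valued function such that |∂_x^α ∂_η^β Φ(x,η)| ≤ B for all multi-indices with 2 ≤ |α|+|β| ≤ M and all (x,η), and |det ∂²_{x,η} Φ(x,η)| ≥ δ for all (x,η). Let χ : ℝ^{2d} → ℝ^{2d} be a map such that χ(∇_η Φ(x,η), η) = (x, ∇_x Φ(x,η)) for all (x,η) ∈ ℝ^{2d}. Let a : ℝ^d × ℝ^d → ℂ be smooth with all derivatives bounded, and define for f ∈ 𝒮(ℝ^d): T f(x) = (2π)^{−d} ∫_{ℝ^d} e^{iΦ(x,η)} a(x,η) ℱf(η) dη. Then |⟨T(π(z)g), π(w)g⟩| ≤ C·‖a‖_{m′}·(1+|w−χ(z)|²)^{−m/2} for all z, w ∈ ℝ^{2d}, where ‖a‖_{m′} = max over |α|+|β| ≤ m′ of the sup norm of ∂_x^α ∂_η^β a. -/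
open MeasureTheory Complex Real
open scoped ENNReal RealInnerProductSpace

noncomputable section

abbrev E (d : ℕ) : Type := EuclideanSpace ℝ (Fin d)

/-- Phase space `ℝ^{2d} = ℝ^d × ℝ^d`. -/
abbrev P (d : ℕ) : Type := E d × E d

/-- Square of the Euclidean norm on the phase space `ℝ^{2d}`. -/
def ensq {d : ℕ} (z : P d) : ℝ := ‖z.1‖ ^ 2 + ‖z.2‖ ^ 2

/-- The wave packet `π(z)g(y) = exp(i y·ξ)·g(y-x)`, Gaussian window `g(y)=exp(-|y|²/2)`. -/
def pk (d : ℕ) (z : P d) (y : E d) : ℂ :=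
  Complex.exp (Complex.I * (⟪y, z.2⟫ : ℂ)) * Real.exp (-‖y - z.1‖ ^ 2 / 2)

/-- The complex conjugate of the wave packet `π(z)g`. -/
def pkbar (d : ℕ) (z : P d) (y : E d) : ℂ :=
  Complex.exp (-Complex.I * (⟪y, z.2⟫ : ℂ)) * Real.exp (-‖y - z.1‖ ^ 2 / 2)

/-- The Fourier transform `ℱu(ξ) = ∫ exp(-i x·ξ) u(x) dx`. -/
def FT (d : ℕ) (u : E d → ℂ) (ξ : E d) : ℂ :=
  ∫ x, Complex.exp (-Complex.I * (⟪x, ξ⟫ : ℂ)) * u x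

/-- The mixed Hessian matrix `∂²_{x,η}Φ(x,η) = (∂²Φ/∂x_j∂η_k)_{j,k}`. -/
def mixedHess (d : ℕ) (Φ : P d → ℝ) (x η : E d) : Matrix (Fin d) (Fin d) ℝ :=
  Matrix.of fun j k =>
    fderiv ℝ (fun x' : E d =>
        fderiv ℝ (fun η' : E d => Φ (x', η')) η (EuclideanSpace.single k (1 : ℝ))) x
      (EuclideanSpace.single j (1 : ℝ))

section NonstationaryPhase

variable {V : Type*} [NormedAddCommGroup V] [NormedSpace ℝ V]

/-- The derivative of `f` in the fixed direction `e`. -/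
def dirDeriv (e : V) (f : V → ℂ) : V → ℂ := fun p => fderiv ℝ f p e

/-- `f` is smooth and its derivatives of order at most `j` in direction `e` grow at most like
`C (1 + ‖p - p₀‖) ^ k`. -/
def PolyBdd (e p₀ : V) (j k : ℕ) (C : ℝ) (f : V → ℂ) : Prop :=
  ContDiff ℝ (⊤ : ℕ∞) f ∧
    ∀ i ≤ j, ∀ p, ‖(dirDeriv e)^[i] f p‖ ≤ C * (1 + ‖p - p₀‖) ^ k

theorem ContDiff.dirDeriv {f : V → ℂ} (hf : ContDiff ℝ (⊤ : ℕ∞) f) (e : V) :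
    ContDiff ℝ (⊤ : ℕ∞) (dirDeriv e f) :=
  (hf.fderiv_right (m := (⊤ : ℕ∞)) (by simp)).clm_apply contDiff_const

namespace PolyBdd

variable {e p₀ : V} {j k l : ℕ} {C D : ℝ} {f g : V → ℂ}

theorem succ_iff : PolyBdd e p₀ (j + 1) k C f ↔
    ContDiff ℝ (⊤ : ℕ∞) f ∧ (∀ p, ‖f p‖ ≤ C * (1 + ‖p - p₀‖) ^ k) ∧
      PolyBdd e p₀ j k C (_root_.dirDeriv e f) := by
  constructor
  · rintro ⟨h, h'⟩
    exact ⟨h, fun p => h' 0 (by simp) p, h.dirDeriv e, fun i hi p => h' (i + 1) (by lia) p⟩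
  · rintro ⟨h, h0, -, h'⟩
    refine ⟨h, fun i hi p => ?_⟩
    cases i with
    | zero => exact h0 p
    | succ i => exact h' i (by lia) p

theorem zero_iff : PolyBdd e p₀ 0 k C f ↔
    ContDiff ℝ (⊤ : ℕ∞) f ∧ (∀ p, ‖f p‖ ≤ C * (1 + ‖p - p₀‖) ^ k) := by
  simp [PolyBdd]

theorem norm_le (h : PolyBdd e p₀ j k C f) (p : V) : ‖f p‖ ≤ C * (1 + ‖p - p₀‖) ^ k :=
  h.2 0 (by simp) p

theorem nonneg (h : PolyBdd e p₀ j k C f) : 0 ≤ C := by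
  simpa using (norm_nonneg _).trans (h.norm_le p₀)

theorem mono {j' k' : ℕ} {C' : ℝ} (h : PolyBdd e p₀ j k C f) (hj : j' ≤ j) (hk : k ≤ k')
    (hC : C ≤ C') : PolyBdd e p₀ j' k' C' f := by
  refine ⟨h.1, fun i hi p => (h.2 i (hi.trans hj) p).trans ?_⟩
  have := h.nonneg
  have hC' := this.trans hC
  have hp : 1 ≤ 1 + ‖p - p₀‖ := by linarith [norm_nonneg (p - p₀)]
  gcongr

theorem dirDeriv (h : PolyBdd e p₀ (j + 1) k C f) :
    PolyBdd e p₀ j k C (_root_.dirDeriv e f) :=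
  (succ_iff.1 h).2.2

theorem add (hf : PolyBdd e p₀ j k C f) (hg : PolyBdd e p₀ j k D g) :
    PolyBdd e p₀ j k (C + D) (fun p => f p + g p) := by
  have h0 : ∀ p, ‖f p + g p‖ ≤ (C + D) * (1 + ‖p - p₀‖) ^ k := fun p =>
    (norm_add_le _ _).trans (by linarith [hf.norm_le p, hg.norm_le p])
  induction j generalizing f g with
  | zero => exact zero_iff.2 ⟨hf.1.add hg.1, h0⟩
  | succ j ih =>
    refine succ_iff.2 ⟨hf.1.add hg.1, h0, ?_⟩
    have : _root_.dirDeriv e (fun p => f p + g p) =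
        fun p => _root_.dirDeriv e f p + _root_.dirDeriv e g p := by
      funext p
      simp only [_root_.dirDeriv]
      rw [fderiv_fun_add (hf.1.differentiable (by simp) p) (hg.1.differentiable (by simp) p)]
      rfl
    rw [this]
    exact ih hf.dirDeriv hg.dirDeriv fun p =>
      (norm_add_le _ _).trans (by linarith [hf.dirDeriv.norm_le p, hg.dirDeriv.norm_le p])

theorem neg (hf : PolyBdd e p₀ j k C f) : PolyBdd e p₀ j k C (fun p => -f p) := by
  have h0 : ∀ p, ‖-f p‖ ≤ C * (1 + ‖p - p₀‖) ^ k := fun p => by simpa using hf.norm_le p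
  induction j generalizing f with
  | zero => exact zero_iff.2 ⟨hf.1.neg, h0⟩
  | succ j ih =>
    refine succ_iff.2 ⟨hf.1.neg, h0, ?_⟩
    have : _root_.dirDeriv e (fun p => -f p) = fun p => -_root_.dirDeriv e f p := by
      funext p
      simp [_root_.dirDeriv, fderiv_fun_neg]
    rw [this]
    exact ih hf.dirDeriv fun p => by simpa using hf.dirDeriv.norm_le p

theorem norm_mul_le (hf : PolyBdd e p₀ j k C f) (hg : PolyBdd e p₀ j l D g) (p : V) :
    ‖f p * g p‖ ≤ (2 ^ j * (C * D)) * (1 + ‖p - p₀‖) ^ (k + l) := by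
  have hC := hf.nonneg
  have hD := hg.nonneg
  rw [norm_mul]
  calc ‖f p‖ * ‖g p‖ ≤ (C * (1 + ‖p - p₀‖) ^ k) * (D * (1 + ‖p - p₀‖) ^ l) := by
        gcongr
        exacts [hf.norm_le p, hg.norm_le p]
    _ = 1 * (C * D) * (1 + ‖p - p₀‖) ^ (k + l) := by ring
    _ ≤ _ := by
      gcongr
      exact one_le_pow₀ (by norm_num)

theorem mul (hf : PolyBdd e p₀ j k C f) (hg : PolyBdd e p₀ j l D g) :
    PolyBdd e p₀ j (k + l) (2 ^ j * (C * D)) (fun p => f p * g p) := by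
  have h0 := hf.norm_mul_le hg
  induction j generalizing f g with
  | zero => exact zero_iff.2 ⟨hf.1.mul hg.1, h0⟩
  | succ j ih =>
    refine succ_iff.2 ⟨hf.1.mul hg.1, h0, ?_⟩
    have : _root_.dirDeriv e (fun p => f p * g p) =
        fun p => f p * _root_.dirDeriv e g p + _root_.dirDeriv e f p * g p := by
      funext p
      simp only [_root_.dirDeriv]
      rw [fderiv_fun_mul (hf.1.differentiable (by simp) p) (hg.1.differentiable (by simp) p)]
      simp [mul_comm]
    rw [this]
    have hf' := hf.mono (j' := j) (by lia) le_rfl le_rfl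
    have hg' := hg.mono (j' := j) (by lia) le_rfl le_rfl
    exact ((ih hf' hg.dirDeriv (hf'.norm_mul_le hg.dirDeriv)).add
      (ih hf.dirDeriv hg' (hf.dirDeriv.norm_mul_le hg'))).mono le_rfl le_rfl
      (by rw [pow_succ]; linarith)

theorem mul_sub_dirDeriv {s b : V → ℂ} {S : ℝ} (hs : PolyBdd e p₀ j 1 S s)
    (hb : PolyBdd e p₀ (j + 1) k C b) :
    PolyBdd e p₀ j (k + 1) ((2 ^ j * S + 1) * C) (fun p => s p * b p - _root_.dirDeriv e b p) := by
  have h1 := hs.mul (hb.mono (j' := j) (by lia) le_rfl le_rfl)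
  have h2 := (hb.dirDeriv.neg).mono (k' := k + 1) le_rfl (by lia) le_rfl
  simpa only [sub_eq_add_neg] using
    (h1.mono le_rfl (by lia : 1 + k ≤ k + 1) le_rfl).add h2 |>.mono le_rfl le_rfl
      (C' := (2 ^ j * S + 1) * C) (by linarith)

end PolyBdd

theorem iterate_dirDeriv_eq_iteratedFDeriv {e : V} {f : V → ℂ} (hf : ContDiff ℝ (⊤ : ℕ∞) f) (i : ℕ)
    (p : V) : (dirDeriv e)^[i] f p = iteratedFDeriv ℝ i f p (fun _ => e) := by
  induction i generalizing p with
  | zero => simp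
  | succ i ih =>
    rw [Function.iterate_succ_apply', funext ih, iteratedFDeriv_succ_apply_left, dirDeriv,
      fderiv_continuousMultilinear_apply_const_apply]
    · rfl
    · exact (hf.differentiable_iteratedFDeriv (by exact_mod_cast WithTop.coe_lt_top _)) p

theorem norm_iterate_dirDeriv_le {e : V} (he : ‖e‖ ≤ 1) {f : V → ℂ}
    (hf : ContDiff ℝ (⊤ : ℕ∞) f) (i : ℕ) (p : V) :
    ‖(dirDeriv e)^[i] f p‖ ≤ ‖iteratedFDeriv ℝ i f p‖ := by
  rw [iterate_dirDeriv_eq_iteratedFDeriv hf]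
  refine (ContinuousMultilinearMap.le_opNorm _ _).trans ?_
  exact mul_le_of_le_one_right (norm_nonneg _)
    (Finset.prod_le_one (fun _ _ => norm_nonneg _) fun _ _ => he)

variable [MeasurableSpace V] [BorelSpace V] {ν : Measure V}

theorem integrable_mul_of_polyBdd [SecondCountableTopology V] {e p₀ : V} {j k : ℕ} {C : ℝ} {W : V → ℂ} {b : V → ℂ}
    (hW : Continuous W)
    (hWint : Integrable (fun p => (1 + ‖p - p₀‖) ^ k * ‖W p‖) ν)
    (hb : PolyBdd e p₀ j k C b) : Integrable (fun p => W p * b p) ν := by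
  refine (hWint.const_mul C).mono' (hW.mul hb.1.continuous).aestronglyMeasurable
    (Filter.Eventually.of_forall fun p => ?_)
  rw [norm_mul]
  nlinarith [hb.norm_le p, norm_nonneg (W p)]

/-- Repeated integration by parts in a fixed direction against an oscillating weight `W`, whose
logarithmic derivative is `c - s` with `c` constant. -/
theorem pow_mul_norm_integral_le [FiniteDimensional ℝ V] [ν.IsAddHaarMeasure] {e p₀ : V} {N : ℕ} {S : ℝ} {c : ℂ} {W s : V → ℂ}
    (hW : ContDiff ℝ (⊤ : ℕ∞) W)
    (hWs : ∀ p, dirDeriv e W p = (c - s p) * W p)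
    (hWint : ∀ k, Integrable (fun p => (1 + ‖p - p₀‖) ^ k * ‖W p‖) ν)
    (hs : PolyBdd e p₀ N 1 S s) (n k : ℕ) (hn : n ≤ N) (C : ℝ) (b : V → ℂ)
    (hb : PolyBdd e p₀ n k C b) :
    ‖c‖ ^ n * ‖∫ p, W p * b p ∂ν‖ ≤
      (2 ^ N * S + 1) ^ n * C * ∫ p, (1 + ‖p - p₀‖) ^ (k + n) * ‖W p‖ ∂ν := by
  have hS := hs.nonneg
  induction n generalizing k C b with
  | zero =>
    simp only [pow_zero, one_mul, add_zero]
    rw [← integral_const_mul]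
    refine norm_integral_le_of_norm_le ((hWint k).const_mul C)
      (Filter.Eventually.of_forall fun p => ?_)
    rw [norm_mul]
    nlinarith [hb.norm_le p, norm_nonneg (W p)]
  | succ n ih =>
    have hC := hb.nonneg
    have hs' := hs.mono (j' := n) (by lia) le_rfl le_rfl
    have hM := (hs'.mul_sub_dirDeriv hb).mono le_rfl le_rfl
      (C' := (2 ^ N * S + 1) * C) (by gcongr; exacts [by norm_num, by lia])
    have hsb := hs'.mul (hb.mono (j' := n) (by lia) le_rfl le_rfl)
    have i1 : Integrable (fun p => W p * b p) ν :=
      integrable_mul_of_polyBdd hW.continuous (hWint _) hb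
    have i2 : Integrable (fun p => W p * dirDeriv e b p) ν :=
      integrable_mul_of_polyBdd hW.continuous (hWint _) hb.dirDeriv
    have i3 : Integrable (fun p => W p * (s p * b p)) ν :=
      integrable_mul_of_polyBdd hW.continuous (hWint _) hsb
    have i4 : Integrable (fun p => dirDeriv e W p * b p) ν := by
      refine ((i1.const_mul c).sub i3).congr (Filter.Eventually.of_forall fun p => ?_)
      simp only [hWs, Pi.sub_apply]
      ring
    have ibp : ∫ p, W p * dirDeriv e b p ∂ν = -∫ p, dirDeriv e W p * b p ∂ν :=
      integral_mul_fderiv_eq_neg_fderiv_mul_of_integrable i4 i2 i1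
        (fun p _ => hW.differentiable (by simp) p) (fun p _ => hb.1.differentiable (by simp) p)
    have key : c * ∫ p, W p * b p ∂ν = ∫ p, W p * (s p * b p - dirDeriv e b p) ∂ν := by
      have e1 : ∫ p, W p * (s p * b p - dirDeriv e b p) ∂ν =
          (∫ p, W p * (s p * b p) ∂ν) - ∫ p, W p * dirDeriv e b p ∂ν := by
        rw [← integral_sub i3 i2]
        congr 1 with p
        ring
      rw [e1, ibp, sub_neg_eq_add, ← integral_add i3 i4, ← integral_const_mul]
      congr 1 with p
      rw [hWs]
      ring
    have := ih (k + 1) (by lia) _ _ hM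
    rw [← key, norm_mul] at this
    calc ‖c‖ ^ (n + 1) * ‖∫ p, W p * b p ∂ν‖ = ‖c‖ ^ n * (‖c‖ * ‖∫ p, W p * b p ∂ν‖) := by ring
      _ ≤ _ := this
      _ = _ := by
        rw [show k + 1 + n = k + (n + 1) by ring]
        ring

end NonstationaryPhase

section PolynomialBounds

variable {V : Type*} [NormedAddCommGroup V] [NormedSpace ℝ V] {e p₀ : V} {j k : ℕ}

theorem polyBdd_const (e p₀ : V) (j k : ℕ) {c : ℂ} {C : ℝ} (hc : ‖c‖ ≤ C) :
    PolyBdd e p₀ j k C (fun _ => c) := by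
  have hC : 0 ≤ C := (norm_nonneg c).trans hc
  have bound : ∀ c' : ℂ, ‖c'‖ ≤ C → ∀ p, ‖c'‖ ≤ C * (1 + ‖p - p₀‖) ^ k := fun c' h p =>
    h.trans (le_mul_of_one_le_right hC (one_le_pow₀ (by linarith [norm_nonneg (p - p₀)])))
  induction j generalizing c with
  | zero => exact PolyBdd.zero_iff.2 ⟨contDiff_const, bound c hc⟩
  | succ j ih =>
    refine PolyBdd.succ_iff.2 ⟨contDiff_const, bound c hc, ?_⟩
    have : dirDeriv e (fun _ : V => c) = fun _ => 0 := by
      funext p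
      simp [dirDeriv]
    rw [this]
    exact ih (by simpa using hC)

/-- A smooth function whose derivative in direction `e` is a constant. -/
theorem polyBdd_of_dirDeriv_const {f : V → ℂ} {c : ℂ} {C : ℝ} (hf : ContDiff ℝ (⊤ : ℕ∞) f)
    (h0 : ∀ p, ‖f p‖ ≤ C * (1 + ‖p - p₀‖) ^ k) (hd : ∀ p, dirDeriv e f p = c) (hc : ‖c‖ ≤ C) :
    PolyBdd e p₀ j k C f := by
  cases j with
  | zero => exact PolyBdd.zero_iff.2 ⟨hf, h0⟩
  | succ j => exact PolyBdd.succ_iff.2 ⟨hf, h0, by rw [funext hd]; exact polyBdd_const e p₀ j k hc⟩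

theorem polyBdd_of_iteratedFDeriv_le {b : V → ℂ} {R : ℝ} (he : ‖e‖ ≤ 1)
    (hb : ContDiff ℝ (⊤ : ℕ∞) b) (hR : ∀ i ≤ j, ∀ p, ‖iteratedFDeriv ℝ i b p‖ ≤ R) :
    PolyBdd e p₀ j 0 R b :=
  ⟨hb, fun i hi p => by
    simpa using (norm_iterate_dirDeriv_le he hb i p).trans (hR i hi p)⟩

/-- The increment of the derivative of a phase whose derivatives of order at least two are
bounded. -/
theorem polyBdd_dirDeriv_sub {h : V → ℂ} {B : ℝ} (he : ‖e‖ ≤ 1) (hh : ContDiff ℝ (⊤ : ℕ∞) h)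
    (hB : ∀ i, 2 ≤ i → i ≤ j + 2 → ∀ p, ‖iteratedFDeriv ℝ i h p‖ ≤ B) :
    PolyBdd e p₀ j 1 B (fun p => dirDeriv e h p - dirDeriv e h p₀) := by
  have hB0 : 0 ≤ B := (norm_nonneg _).trans (hB 2 le_rfl (by lia) p₀)
  have hdf : Differentiable ℝ (fderiv ℝ h) :=
    (hh.fderiv_right (m := (⊤ : ℕ∞)) (by simp)).differentiable (by simp)
  have smooth : ContDiff ℝ (⊤ : ℕ∞) (fun p => dirDeriv e h p - dirDeriv e h p₀) :=
    (hh.dirDeriv e).sub contDiff_const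
  have h0 : ∀ p, ‖dirDeriv e h p - dirDeriv e h p₀‖ ≤ B * (1 + ‖p - p₀‖) ^ 1 := by
    intro p
    have h1 : ‖fderiv ℝ h p - fderiv ℝ h p₀‖ ≤ B * ‖p - p₀‖ := by
      refine convex_univ.norm_image_sub_le_of_norm_fderiv_le (𝕜 := ℝ) (fun x _ => hdf x)
        (fun x _ => ?_) (Set.mem_univ _) (Set.mem_univ _)
      rw [← norm_iteratedFDeriv_one, norm_iteratedFDeriv_fderiv]
      exact hB 2 le_rfl (by lia) x
    calc ‖dirDeriv e h p - dirDeriv e h p₀‖ = ‖(fderiv ℝ h p - fderiv ℝ h p₀) e‖ := by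
          simp [dirDeriv]
      _ ≤ ‖fderiv ℝ h p - fderiv ℝ h p₀‖ * ‖e‖ := ContinuousLinearMap.le_opNorm _ _
      _ ≤ B * ‖p - p₀‖ * 1 := by gcongr
      _ ≤ _ := by nlinarith
  cases j with
  | zero => exact PolyBdd.zero_iff.2 ⟨smooth, h0⟩
  | succ j =>
    refine PolyBdd.succ_iff.2 ⟨smooth, h0, ?_⟩
    have : dirDeriv e (fun p => dirDeriv e h p - dirDeriv e h p₀) = (dirDeriv e)^[2] h := by
      funext p
      simp only [dirDeriv, Function.iterate_succ, Function.iterate_zero, Function.comp_apply, id]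
      rw [fderiv_sub_const]
      rfl
    rw [this]
    refine ⟨(hh.dirDeriv e).dirDeriv e, fun i hi p => ?_⟩
    rw [← Function.iterate_add_apply]
    refine (norm_iterate_dirDeriv_le he hh _ p).trans ((hB _ (by lia) (by lia) p).trans ?_)
    exact le_mul_of_one_le_right hB0 (one_le_pow₀ (by linarith [norm_nonneg (p - p₀)]))

end PolynomialBounds

section GaussianWeight

variable {d : ℕ}

theorem ensq_nonneg (z : P d) : 0 ≤ ensq z := by
  unfold ensq
  positivity

theorem sq_norm_le_ensq (z : P d) : ‖z‖ ^ 2 ≤ ensq z := by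
  unfold ensq
  rcases le_total ‖z.1‖ ‖z.2‖ with h | h
  · rw [Prod.norm_def, max_eq_right h]
    nlinarith [norm_nonneg z.1]
  · rw [Prod.norm_def, max_eq_left h]
    nlinarith [norm_nonneg z.2]

theorem contDiff_ensq : ContDiff ℝ (⊤ : ℕ∞) (ensq (d := d)) :=
  (contDiff_fst.norm_sq ℝ).add (contDiff_snd.norm_sq ℝ)

theorem integrable_exp_neg_ensq {b : ℝ} (hb : 0 < b) :
    Integrable (fun p : P d => Real.exp (-b * ensq p)) := by
  have h : Integrable (fun x : E d => Real.exp (-b * ‖x‖ ^ 2)) := by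
    have := (GaussianFourier.integrable_cexp_neg_mul_sq_norm_add (V := E d) (b := b)
      (by simpa using hb) 0 0).norm
    refine this.congr (Filter.Eventually.of_forall fun x => ?_)
    simp [Complex.norm_exp, ← Complex.ofReal_pow]
  refine (h.mul_prod h).congr (Filter.Eventually.of_forall fun p => ?_)
  simp only [ensq]
  rw [← Real.exp_add]
  ring_nf

theorem integrable_pow_mul_exp_neg_ensq (k : ℕ) :
    Integrable (fun p : P d => (1 + ‖p‖) ^ k * Real.exp (-(ensq p / 2))) := by
  refine ((integrable_exp_neg_ensq (d := d) (b := 1 / 4) (by norm_num)).const_mul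
    (k.factorial * Real.exp 2)).mono' ?_ (Filter.Eventually.of_forall fun p => ?_)
  · refine Continuous.aestronglyMeasurable ?_
    have := (contDiff_ensq (d := d)).continuous
    fun_prop
  · rw [Real.norm_of_nonneg (by positivity)]
    have h1 : (1 + ‖p‖) ^ k ≤ k.factorial * Real.exp (1 + ‖p‖) := by
      have := Real.pow_div_factorial_le_exp (1 + ‖p‖) (by positivity) k
      rwa [div_le_iff₀' (by positivity)] at this
    calc (1 + ‖p‖) ^ k * Real.exp (-(ensq p / 2))
        ≤ (k.factorial * Real.exp (1 + ‖p‖)) * Real.exp (-(ensq p / 2)) := by gcongr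
      _ = k.factorial * Real.exp (1 + ‖p‖ - ensq p / 2) := by
        rw [mul_assoc, ← Real.exp_add]; rfl
      _ ≤ k.factorial * Real.exp (2 + -(1 / 4) * ensq p) := by
        gcongr
        nlinarith [sq_norm_le_ensq p, sq_nonneg (‖p‖ - 2)]
      _ = _ := by rw [Real.exp_add, mul_assoc]

/-- Oscillating Gaussian weight with phase `Φ - L`, centred at `p₀`. -/
def oscWeight (Φ : P d → ℝ) (L : P d →L[ℝ] ℝ) (p₀ p : P d) : ℂ :=
  Complex.exp (Complex.I * ((Φ p - L p : ℝ) : ℂ) - ((ensq (p - p₀) / 2 : ℝ) : ℂ))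

variable {Φ : P d → ℝ} {L : P d →L[ℝ] ℝ} {p₀ : P d}

theorem norm_oscWeight (p : P d) :
    ‖oscWeight Φ L p₀ p‖ = Real.exp (-(ensq (p - p₀) / 2)) := by
  simp [oscWeight, Complex.norm_exp]

theorem contDiff_oscWeight (hΦ : ContDiff ℝ (⊤ : ℕ∞) Φ) :
    ContDiff ℝ (⊤ : ℕ∞) (oscWeight Φ L p₀) := by
  have h1 : ContDiff ℝ (⊤ : ℕ∞) (fun p => ((Φ p - L p : ℝ) : ℂ)) :=
    Complex.ofRealCLM.contDiff.comp (hΦ.sub L.contDiff)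
  have h2 : ContDiff ℝ (⊤ : ℕ∞) (fun p : P d => ((ensq (p - p₀) / 2 : ℝ) : ℂ)) :=
    Complex.ofRealCLM.contDiff.comp
      ((contDiff_ensq.comp (contDiff_id.sub contDiff_const)).div_const 2)
  exact ((contDiff_const.mul h1).sub h2).cexp

theorem hasFDerivAt_half_ensq_sub (p : P d) :
    HasFDerivAt (fun p : P d => ensq (p - p₀) / 2)
      ((innerSL ℝ (p - p₀).1).comp (ContinuousLinearMap.fst ℝ (E d) (E d)) +
        (innerSL ℝ (p - p₀).2).comp (ContinuousLinearMap.snd ℝ (E d) (E d))) p := by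
  have h : HasFDerivAt (fun p : P d => p - p₀) (ContinuousLinearMap.id ℝ (P d)) p :=
    (hasFDerivAt_id p).sub_const p₀
  have h1 := h.fst.norm_sq
  have h2 := h.snd.norm_sq
  have h3 := (h1.add h2).mul_const (1 / 2)
  refine (h3.congr_fderiv ?_).congr_of_eventuallyEq (Filter.Eventually.of_forall fun q => ?_)
  · ext q <;> simp
  · simp [ensq]
    ring

theorem iteratedFDeriv_I_mul_norm (hΦ : ContDiff ℝ (⊤ : ℕ∞) Φ) (i : ℕ) (p : P d) :
    ‖iteratedFDeriv ℝ i (fun p => Complex.I * (Φ p : ℂ)) p‖ = ‖iteratedFDeriv ℝ i Φ p‖ := by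
  have : (fun p => Complex.I * (Φ p : ℂ)) =
      LinearIsometry.toSpanSingleton ℝ ℂ Complex.norm_I ∘ Φ := by
    funext p
    simp [mul_comm]
  rw [this]
  exact LinearIsometry.norm_iteratedFDeriv_comp_left _ hΦ.contDiffAt (by exact_mod_cast le_top)

theorem dirDeriv_I_mul (hΦ : ContDiff ℝ (⊤ : ℕ∞) Φ) (e p : P d) :
    dirDeriv e (fun p => Complex.I * (Φ p : ℂ)) p = Complex.I * (fderiv ℝ Φ p e : ℂ) := by
  have h : HasFDerivAt (fun p => Complex.I * (Φ p : ℂ)) _ p :=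
    (Complex.ofRealCLM.hasFDerivAt.comp p
      (hΦ.differentiable (by simp) p).hasFDerivAt).const_mul Complex.I
  rw [dirDeriv, h.fderiv]
  simp

/-- The part of the logarithmic derivative of `oscWeight` that vanishes at the centre. -/
def oscRemainder (Φ : P d → ℝ) (e p₀ p : P d) : ℂ :=
  ((⟪(p - p₀).1, e.1⟫ + ⟪(p - p₀).2, e.2⟫ : ℝ) : ℂ) -
    (dirDeriv e (fun p => Complex.I * (Φ p : ℂ)) p -
      dirDeriv e (fun p => Complex.I * (Φ p : ℂ)) p₀)

theorem dirDeriv_oscWeight (hΦ : ContDiff ℝ (⊤ : ℕ∞) Φ) (e p : P d) :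
    dirDeriv e (oscWeight Φ L p₀) p =
      (Complex.I * ((fderiv ℝ Φ p₀ e - L e : ℝ) : ℂ) - oscRemainder Φ e p₀ p) *
        oscWeight Φ L p₀ p := by
  have h1 := (Complex.ofRealCLM.hasFDerivAt.comp p
    ((hΦ.differentiable (by simp) p).hasFDerivAt.sub L.hasFDerivAt)).const_mul Complex.I
  have h2 := Complex.ofRealCLM.hasFDerivAt.comp p (hasFDerivAt_half_ensq_sub (p₀ := p₀) p)
  have h3 : HasFDerivAt (oscWeight Φ L p₀) _ p := (h1.sub h2).cexp
  rw [dirDeriv, h3.fderiv, oscRemainder, dirDeriv_I_mul hΦ, dirDeriv_I_mul hΦ]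
  simp [oscWeight, inner_sub_left]
  ring

theorem polyBdd_oscRemainder {e : P d} {B : ℝ} {j : ℕ} (he : ‖e‖ ≤ 1)
    (hΦ : ContDiff ℝ (⊤ : ℕ∞) Φ)
    (hB : ∀ i, 2 ≤ i → i ≤ j + 2 → ∀ p, ‖iteratedFDeriv ℝ i Φ p‖ ≤ B) :
    PolyBdd e p₀ j 1 (2 + B) (oscRemainder Φ e p₀) := by
  have he1 : ‖e.1‖ ≤ 1 := (norm_fst_le e).trans he
  have he2 : ‖e.2‖ ≤ 1 := (norm_snd_le e).trans he
  have smooth : ContDiff ℝ (⊤ : ℕ∞) (fun p => Complex.I * (Φ p : ℂ)) :=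
    contDiff_const.mul (Complex.ofRealCLM.contDiff.comp hΦ)
  have h1 := polyBdd_dirDeriv_sub (p₀ := p₀) (j := j) (B := B) he smooth fun i hi hi' p =>
    (iteratedFDeriv_I_mul_norm hΦ i p).trans_le (hB i hi hi' p)
  have h2 : PolyBdd e p₀ j 1 2
      (fun p => ((⟪(p - p₀).1, e.1⟫ + ⟪(p - p₀).2, e.2⟫ : ℝ) : ℂ)) := by
    let ℓ : P d →L[ℝ] ℝ := (innerSL ℝ e.1).comp (ContinuousLinearMap.fst ℝ (E d) (E d)) +
        (innerSL ℝ e.2).comp (ContinuousLinearMap.snd ℝ (E d) (E d))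
    have hl : (fun p => ((⟪(p - p₀).1, e.1⟫ + ⟪(p - p₀).2, e.2⟫ : ℝ) : ℂ)) =
        fun p => ((ℓ (p - p₀) : ℝ) : ℂ) := by
      funext p
      simp only [ℓ, add_apply, ContinuousLinearMap.comp_apply,
        ContinuousLinearMap.coe_fst', ContinuousLinearMap.coe_snd', innerSL_apply_apply,
        real_inner_comm]
    have bound : ∀ q : P d, ‖((ℓ q : ℝ) : ℂ)‖ ≤ 2 * ‖q‖ := by
      intro q
      have a1 : |⟪e.1, q.1⟫| ≤ 1 * ‖q‖ := (abs_real_inner_le_norm _ _).trans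
        (mul_le_mul he1 (norm_fst_le q) (norm_nonneg _) (by norm_num))
      have a2 : |⟪e.2, q.2⟫| ≤ 1 * ‖q‖ := (abs_real_inner_le_norm _ _).trans
        (mul_le_mul he2 (norm_snd_le q) (norm_nonneg _) (by norm_num))
      rw [Complex.norm_real, Real.norm_eq_abs]
      calc |ℓ q| = |⟪e.1, q.1⟫ + ⟪e.2, q.2⟫| := by simp [ℓ]
        _ ≤ _ := (abs_add_le _ _).trans (by linarith)
    rw [hl]
    refine polyBdd_of_dirDeriv_const (c := ((ℓ e : ℝ) : ℂ)) ?_ (fun p => ?_) (fun p => ?_) ?_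
    · exact Complex.ofRealCLM.contDiff.comp (ℓ.contDiff.comp (contDiff_id.sub contDiff_const))
    · exact (bound _).trans (by nlinarith)
    · have : HasFDerivAt (fun p => ((ℓ (p - p₀) : ℝ) : ℂ)) _ p :=
        Complex.ofRealCLM.hasFDerivAt.comp p
          (ℓ.hasFDerivAt.comp p ((hasFDerivAt_id p).sub_const p₀))
      rw [dirDeriv, this.fderiv]
      simp
    · exact (bound e).trans (by linarith)
  simpa only [sub_eq_add_neg, oscRemainder] using! h2.add h1.neg

instance isAddHaarMeasure_volume_phaseSpace (d : ℕ) :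
    (volume : Measure (P d)).IsAddHaarMeasure :=
  inferInstanceAs ((volume : Measure (E d)).prod (volume : Measure (E d))).IsAddHaarMeasure

/-- Decay of the oscillatory integral in terms of the gradient of its phase at the centre. -/
theorem exists_oscillatory_bound (d N : ℕ) {B : ℝ} (hB : 0 ≤ B) :
    ∃ K : ℝ, 0 ≤ K ∧ ∀ Φ : P d → ℝ, ContDiff ℝ (⊤ : ℕ∞) Φ →
      (∀ i, 2 ≤ i → i ≤ N + 2 → ∀ p, ‖iteratedFDeriv ℝ i Φ p‖ ≤ B) →
      ∀ b : P d → ℂ, ContDiff ℝ (⊤ : ℕ∞) b → ∀ R : ℝ, 0 ≤ R →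
      (∀ i ≤ N, ∀ p, ‖iteratedFDeriv ℝ i b p‖ ≤ R) →
      ∀ (L : P d →L[ℝ] ℝ) (p₀ e : P d), ‖e‖ ≤ 1 →
        |fderiv ℝ Φ p₀ e - L e| ^ N * ‖∫ p, oscWeight Φ L p₀ p * b p‖ ≤ K * R := by
  refine ⟨(2 ^ N * (2 + B) + 1) ^ N * ∫ p : P d, (1 + ‖p‖) ^ N * Real.exp (-(ensq p / 2)),
    mul_nonneg (by positivity) (integral_nonneg fun p => by positivity), ?_⟩
  intro Φ hΦ hΦB b hb R hR hbR L p₀ e he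
  have hint : ∀ k, Integrable (fun p => (1 + ‖p - p₀‖) ^ k * ‖oscWeight Φ L p₀ p‖) := by
    intro k
    simp only [norm_oscWeight]
    exact (integrable_pow_mul_exp_neg_ensq k).comp_sub_right p₀
  have := pow_mul_norm_integral_le (ν := volume) (contDiff_oscWeight (L := L) (p₀ := p₀) hΦ)
    (dirDeriv_oscWeight hΦ e) hint (polyBdd_oscRemainder he hΦ hΦB) N 0 le_rfl R b
    (polyBdd_of_iteratedFDeriv_le he hb hbR)
  simp only [norm_oscWeight, zero_add, norm_mul, Complex.norm_I, one_mul, Complex.norm_real,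
    Real.norm_eq_abs] at this
  rw [integral_sub_right_eq_self
    (fun p : P d => (1 + ‖p‖) ^ N * Real.exp (-(ensq p / 2))) p₀] at this
  exact this.trans_eq (by ring)

theorem integrable_oscWeight_mul (hΦ : ContDiff ℝ (⊤ : ℕ∞) Φ) {b : P d → ℂ} (hb : Continuous b)
    {R : ℝ} (hbR : ∀ p, ‖b p‖ ≤ R) : Integrable (fun p => oscWeight Φ L p₀ p * b p) := by
  have h0 : Integrable (oscWeight Φ L p₀) := by
    refine (((integrable_pow_mul_exp_neg_ensq (d := d) 0).comp_sub_right p₀).mono'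
      (contDiff_oscWeight hΦ).continuous.aestronglyMeasurable
      (Filter.Eventually.of_forall fun p => ?_))
    simp [norm_oscWeight]
  exact h0.mul_bdd hb.aestronglyMeasurable (Filter.Eventually.of_forall hbR)

end GaussianWeight

section GlobalInverse

/-- A map whose derivative admits right inverses bounded by `K` is onto, with a linear estimate of
the distance from any given point to a preimage. -/
theorem exists_eq_of_bounded_right_inverse {X Y : Type*} [NormedAddCommGroup X] [NormedSpace ℝ X]
    [ProperSpace X] [NormedAddCommGroup Y] [NormedSpace ℝ Y] {F : X → Y} {F' : X → X →L[ℝ] Y}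
    (hF : ∀ x, HasFDerivAt F (F' x) x) {K : ℝ} (hK : 0 < K)
    (hinv : ∀ x u, ∃ v, F' x v = u ∧ ‖v‖ ≤ K * ‖u‖) (x : X) (y : Y) :
    ∃ x₀, F x₀ = y ∧ ‖x₀ - x‖ ≤ 2 * K * ‖F x - y‖ := by
  have hcont : Continuous F := continuous_iff_continuousAt.2 fun x => (hF x).continuousAt
  obtain ⟨x₀, hx₀⟩ : ∃ x₀, ∀ x', ‖F x₀ - y‖ + (2 * K)⁻¹ * ‖x₀ - x‖ ≤
      ‖F x' - y‖ + (2 * K)⁻¹ * ‖x' - x‖ := by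
    refine Continuous.exists_forall_le (f := fun x' => ‖F x' - y‖ + (2 * K)⁻¹ * ‖x' - x‖)
      (by fun_prop) ?_
    refine Filter.tendsto_atTop_mono (f := fun x' => (2 * K)⁻¹ * ‖x' - x‖)
      (fun x' => by simp) ?_
    refine Filter.Tendsto.const_mul_atTop (by positivity) ?_
    simpa only [dist_eq_norm] using tendsto_dist_right_cocompact_atTop x
  have hy : F x₀ = y := by
    by_contra hne
    have hpos : 0 < ‖F x₀ - y‖ := norm_pos_iff.2 (sub_ne_zero.2 hne)
    obtain ⟨v, hv, hvn⟩ := hinv x₀ (y - F x₀)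
    rw [norm_sub_rev] at hvn
    have hline : HasDerivAt (fun t : ℝ => F (x₀ + t • v)) (y - F x₀) 0 := by
      have h := (hF x₀).hasLineDerivAt v
      rw [hv] at h
      exact h
    have hlo := (hasDerivAt_iff_isLittleO_nhds_zero.1 hline).def
      (show (0 : ℝ) < 1 / 4 * ‖F x₀ - y‖ by positivity)
    obtain ⟨t, ht, ht0, ht1⟩ := ((hlo.filter_mono nhdsWithin_le_nhds).and
      (Ioo_mem_nhdsGT (show (0 : ℝ) < 1 by norm_num))).exists
    simp only [zero_add, zero_smul, add_zero, Real.norm_eq_abs, abs_of_pos ht0] at ht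
    have h1 : ‖F (x₀ + t • v) - y‖ ≤ (1 - t) * ‖F x₀ - y‖ + 1 / 4 * ‖F x₀ - y‖ * t := by
      have : F (x₀ + t • v) - y =
          (1 - t) • (F x₀ - y) + (F (x₀ + t • v) - F x₀ - t • (y - F x₀)) := by
        module
      rw [this]
      refine (norm_add_le _ _).trans (add_le_add ?_ ht)
      rw [norm_smul, Real.norm_of_nonneg (by linarith)]
    have h2 : ‖x₀ + t • v - x‖ ≤ ‖x₀ - x‖ + t * (K * ‖F x₀ - y‖) := by
      rw [add_sub_right_comm]
      refine (norm_add_le _ _).trans (add_le_add le_rfl ?_)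
      rw [norm_smul, Real.norm_of_nonneg ht0.le]
      gcongr
    have h3 : (2 * K)⁻¹ * ‖x₀ + t • v - x‖ ≤
        (2 * K)⁻¹ * ‖x₀ - x‖ + 1 / 2 * (t * ‖F x₀ - y‖) := by
      calc _ ≤ (2 * K)⁻¹ * (‖x₀ - x‖ + t * (K * ‖F x₀ - y‖)) := by gcongr
        _ = _ := by field_simp
    have := hx₀ (x₀ + t • v)
    nlinarith [mul_pos ht0 hpos]
  refine ⟨x₀, hy, ?_⟩
  have := hx₀ x
  rw [hy, sub_self, sub_self, norm_zero, norm_zero, mul_zero, add_zero, zero_add,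
    inv_mul_le_iff₀ (by positivity)] at this
  exact this

/-- Matrices with bounded entries and determinant bounded away from zero have uniformly bounded
inverses. -/
theorem exists_bound_solve_transpose (d : ℕ) {δ : ℝ} (hδ : 0 < δ) (B : ℝ) :
    ∃ K > 0, ∀ A : Matrix (Fin d) (Fin d) ℝ, (∀ j k, |A j k| ≤ B) → δ ≤ |A.det| →
      ∀ u : E d, ∃ v : E d, (∀ k, ∑ j, v j * A j k = u k) ∧ ‖v‖ ≤ K * ‖u‖ := by
  have hcomp : IsCompact {A : Matrix (Fin d) (Fin d) ℝ | ∀ j k, |A j k| ≤ B} := by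
    have : {A : Matrix (Fin d) (Fin d) ℝ | ∀ j k, |A j k| ≤ B} =
        Set.pi Set.univ fun _ => Set.pi Set.univ fun _ => Set.Icc (-B) B := by
      ext A
      exact ⟨fun h j _ k _ => abs_le.1 (h j k), fun h j k => abs_le.2 (h j trivial k trivial)⟩
    rw [this]
    exact isCompact_univ_pi fun _ => isCompact_univ_pi fun _ => isCompact_Icc
  obtain ⟨K, hK⟩ := (hcomp.image (f := fun A : Matrix (Fin d) (Fin d) ℝ =>
    Matrix.toEuclideanCLM (𝕜 := ℝ) A.transpose.adjugate) (by
      have h1 : Continuous fun A : Matrix (Fin d) (Fin d) ℝ => A.transpose.adjugate :=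
        continuous_id.matrix_transpose.matrix_adjugate
      have h2 : Continuous (Matrix.toEuclideanCLM (n := Fin d) (𝕜 := ℝ)) :=
        LinearMap.continuous_of_finiteDimensional
          (Matrix.toEuclideanCLM (n := Fin d) (𝕜 := ℝ)).toAlgEquiv.toLinearMap
      exact h2.comp h1)).isBounded.exists_norm_le
  have hK' : ∀ A : Matrix (Fin d) (Fin d) ℝ, (∀ j k, |A j k| ≤ B) →
      ‖Matrix.toEuclideanCLM (𝕜 := ℝ) A.transpose.adjugate‖ ≤ K := fun A hA =>
    hK _ ⟨A, hA, rfl⟩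
  refine ⟨(|K| + 1) / δ, by positivity, fun A hA hdet u => ?_⟩
  have hne : A.det ≠ 0 := abs_pos.1 (hδ.trans_le hdet)
  set T := Matrix.toEuclideanCLM (𝕜 := ℝ) A.transpose.adjugate
  refine ⟨A.det⁻¹ • T u, fun k => ?_, ?_⟩
  · have h : A.transpose.mulVec (A.transpose.adjugate.mulVec u) = A.det • (u : Fin d → ℝ) := by
      rw [Matrix.mulVec_mulVec, Matrix.mul_adjugate, Matrix.det_transpose, Matrix.smul_mulVec,
        Matrix.one_mulVec]
    have h' := congrFun h k
    simp only [Matrix.mulVec, dotProduct, Matrix.transpose_apply, Pi.smul_apply, smul_eq_mul] at h'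
    rw [← mul_right_inj' hne, ← h', Finset.mul_sum]
    refine Finset.sum_congr rfl fun j _ => ?_
    have hT : (T u) j = ∑ l, A.transpose.adjugate j l * u l := by
      simp [T, Matrix.mulVec, dotProduct]
    rw [PiLp.smul_apply, smul_eq_mul, hT]
    field_simp
  · rw [norm_smul, norm_inv, Real.norm_eq_abs]
    calc |A.det|⁻¹ * ‖T u‖ ≤ δ⁻¹ * ((|K| + 1) * ‖u‖) := by
          gcongr
          refine (T.le_opNorm u).trans ?_
          gcongr
          exact (hK' A hA).trans ((le_abs_self K).trans (by linarith))
      _ = _ := by ring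

end GlobalInverse

section CanonicalTransformation

variable {d : ℕ} {Φ : P d → ℝ}

theorem fderiv_apply_eq_inner_gradient (hΦ : Differentiable ℝ Φ) (x η : E d) (e : P d) :
    fderiv ℝ Φ (x, η) e = ⟪gradient (fun x' => Φ (x', η)) x, e.1⟫ +
      ⟪gradient (fun η' => Φ (x, η')) η, e.2⟫ := by
  have h1 : HasFDerivAt (fun x' => Φ (x', η)) _ x :=
    (hΦ (x, η)).hasFDerivAt.comp x (hasFDerivAt_prodMk_left x η)
  have h2 : HasFDerivAt (fun η' => Φ (x, η')) _ η :=
    (hΦ (x, η)).hasFDerivAt.comp η (hasFDerivAt_prodMk_right x η)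
  simp only [gradient, InnerProductSpace.toDual_symm_apply, h1.fderiv, h2.fderiv,
    ContinuousLinearMap.comp_apply, ContinuousLinearMap.inl_apply, ContinuousLinearMap.inr_apply]
  rw [← map_add]
  simp

theorem gradient_snd_eq (hΦ : Differentiable ℝ Φ) (x η : E d) :
    gradient (fun η' => Φ (x, η')) η = (InnerProductSpace.toDual ℝ (E d)).symm
      ((fderiv ℝ Φ (x, η)).comp (ContinuousLinearMap.inr ℝ (E d) (E d))) := by
  have h2 : HasFDerivAt (fun η' => Φ (x, η')) _ η :=
    (hΦ (x, η)).hasFDerivAt.comp η (hasFDerivAt_prodMk_right x η)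
  rw [gradient, h2.fderiv]

theorem gradient_fst_eq (hΦ : Differentiable ℝ Φ) (x η : E d) :
    gradient (fun x' => Φ (x', η)) x = (InnerProductSpace.toDual ℝ (E d)).symm
      ((fderiv ℝ Φ (x, η)).comp (ContinuousLinearMap.inl ℝ (E d) (E d))) := by
  have h1 : HasFDerivAt (fun x' => Φ (x', η)) _ x :=
    (hΦ (x, η)).hasFDerivAt.comp x (hasFDerivAt_prodMk_left x η)
  rw [gradient, h1.fderiv]

theorem norm_gradient_fst_sub_le (hΦ : ContDiff ℝ (⊤ : ℕ∞) Φ) {B : ℝ}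
    (hB : ∀ p, ‖fderiv ℝ (fderiv ℝ Φ) p‖ ≤ B) (x x' η : E d) :
    ‖gradient (fun x => Φ (x, η)) x - gradient (fun x => Φ (x, η)) x'‖ ≤ B * ‖x - x'‖ := by
  have hd := hΦ.differentiable (by simp)
  have hdf : Differentiable ℝ (fderiv ℝ Φ) :=
    (hΦ.fderiv_right (m := (⊤ : ℕ∞)) (by simp)).differentiable (by simp)
  have h := convex_univ.norm_image_sub_le_of_norm_fderiv_le (𝕜 := ℝ) (fun p _ => hdf p)
    (fun p _ => hB p) (Set.mem_univ (x', η)) (Set.mem_univ (x, η))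
  rw [gradient_fst_eq hd, gradient_fst_eq hd, ← map_sub, LinearIsometryEquiv.norm_map,
    ← ContinuousLinearMap.sub_comp]
  calc _ ≤ ‖fderiv ℝ Φ (x, η) - fderiv ℝ Φ (x', η)‖ *
        ‖ContinuousLinearMap.inl ℝ (E d) (E d)‖ := ContinuousLinearMap.opNorm_comp_le _ _
    _ ≤ ‖fderiv ℝ Φ (x, η) - fderiv ℝ Φ (x', η)‖ * 1 := by
      gcongr
      exact ContinuousLinearMap.norm_inl_le_one ℝ (E d) (E d)
    _ ≤ _ := by simpa [Prod.norm_def] using h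

theorem mixedHess_apply (hΦ : ContDiff ℝ (⊤ : ℕ∞) Φ) (x η : E d) (j k : Fin d) :
    mixedHess d Φ x η j k = fderiv ℝ (fderiv ℝ Φ) (x, η) (EuclideanSpace.single j 1, 0)
      (0, EuclideanSpace.single k 1) := by
  have hd : Differentiable ℝ Φ := hΦ.differentiable (by simp)
  have hdf : Differentiable ℝ (fderiv ℝ Φ) :=
    (hΦ.fderiv_right (m := (⊤ : ℕ∞)) (by simp)).differentiable (by simp)
  have h1 : (fun x' : E d => fderiv ℝ (fun η' : E d => Φ (x', η')) η
      (EuclideanSpace.single k (1 : ℝ))) =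
      fun x' => fderiv ℝ Φ (x', η) (0, EuclideanSpace.single k 1) := by
    funext x'
    have h2 : HasFDerivAt (fun η' => Φ (x', η')) _ η :=
      (hd (x', η)).hasFDerivAt.comp η (hasFDerivAt_prodMk_right x' η)
    rw [h2.fderiv]
    simp
  have h3 : HasFDerivAt (fun x' => fderiv ℝ Φ (x', η)) _ x :=
    (hdf (x, η)).hasFDerivAt.comp x (hasFDerivAt_prodMk_left x η)
  have h4 := h3.clm_apply
    (hasFDerivAt_const ((0, EuclideanSpace.single k 1) : P d) x)
  rw [mixedHess, Matrix.of_apply, h1, h4.fderiv]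
  simp

/-- Solvability of `∇_η Φ(x₀, η) = y`, with a linear estimate. -/
theorem exists_gradient_eq (d : ℕ) {δ : ℝ} (hδ : 0 < δ) (B : ℝ) :
    ∃ K > 0, ∀ Φ : P d → ℝ, ContDiff ℝ (⊤ : ℕ∞) Φ →
      (∀ p, ‖fderiv ℝ (fderiv ℝ Φ) p‖ ≤ B) →
      (∀ x η : E d, δ ≤ |(mixedHess d Φ x η).det|) → ∀ x η y : E d,
        ∃ x₀, gradient (fun η' => Φ (x₀, η')) η = y ∧
          ‖x₀ - x‖ ≤ 2 * K * ‖gradient (fun η' => Φ (x, η')) η - y‖ := by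
  obtain ⟨K, hK, hsolve⟩ := exists_bound_solve_transpose d hδ B
  refine ⟨K, hK, fun Φ hΦ hB hdet x η y => ?_⟩
  have hd : Differentiable ℝ Φ := hΦ.differentiable (by simp)
  have hdf : Differentiable ℝ (fderiv ℝ Φ) :=
    (hΦ.fderiv_right (m := (⊤ : ℕ∞)) (by simp)).differentiable (by simp)
  let T : (P d →L[ℝ] ℝ) →L[ℝ] E d :=
    LinearMap.toContinuousLinearMap
      { toFun := fun l => (InnerProductSpace.toDual ℝ (E d)).symm
          (l.comp (ContinuousLinearMap.inr ℝ (E d) (E d)))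
        map_add' := fun l l' => by rw [ContinuousLinearMap.add_comp, map_add]
        map_smul' := fun c l => by rw [ContinuousLinearMap.smul_comp]; simp }
  have hT : ∀ (l : P d →L[ℝ] ℝ) (k : Fin d), (T l) k = l (0, EuclideanSpace.single k 1) := by
    intro l k
    have : (T l) k = ⟪T l, EuclideanSpace.single k 1⟫ := by simp [EuclideanSpace.inner_single_right]
    rw [this]
    simp [T]
  refine exists_eq_of_bounded_right_inverse
    (F := fun x' => gradient (fun η' => Φ (x', η')) η)
    (F' := fun x' => T.comp ((fderiv ℝ (fderiv ℝ Φ) (x', η)).comp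
      (ContinuousLinearMap.inl ℝ (E d) (E d)))) (fun x' => ?_) hK (fun x' u => ?_) x y
  · simp only [gradient_snd_eq hd]
    exact T.hasFDerivAt.comp x'
      ((hdf (x', η)).hasFDerivAt.comp x' (hasFDerivAt_prodMk_left x' η))
  · have hentry : ∀ j k, |mixedHess d Φ x' η j k| ≤ B := by
      intro j k
      rw [mixedHess_apply hΦ, ← Real.norm_eq_abs]
      have h1 : ‖((EuclideanSpace.single j 1, 0) : P d)‖ ≤ 1 := by simp [Prod.norm_def]
      have h2 : ‖((0, EuclideanSpace.single k 1) : P d)‖ ≤ 1 := by simp [Prod.norm_def]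
      calc _ ≤ ‖fderiv ℝ (fderiv ℝ Φ) (x', η)‖ * ‖((EuclideanSpace.single j 1, 0) : P d)‖ *
            ‖((0, EuclideanSpace.single k 1) : P d)‖ := ContinuousLinearMap.le_opNorm₂ _ _ _
        _ ≤ B * 1 * 1 := by
          have hB0 : 0 ≤ B := le_trans (norm_nonneg (fderiv ℝ (fderiv ℝ Φ) (x', η))) (hB _)
          gcongr
          exact hB _
        _ = B := by ring
    obtain ⟨v, hv, hvn⟩ := hsolve (mixedHess d Φ x' η) hentry (hdet x' η) u
    refine ⟨v, ?_, hvn⟩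
    ext k
    rw [← hv k]
    simp only [ContinuousLinearMap.comp_apply, hT, ContinuousLinearMap.inl_apply]
    have hsum : (v, (0 : E d)) = ∑ j, v j • ((EuclideanSpace.single j 1, 0) : P d) := by
      have h := (EuclideanSpace.basisFun (Fin d) ℝ).sum_repr v
      simp only [EuclideanSpace.basisFun_repr, EuclideanSpace.basisFun_apply] at h
      refine Prod.ext ?_ ?_
      · simp only [Prod.fst_sum, Prod.smul_fst, h]
      · simp [Prod.snd_sum]
    rw [hsum]
    simp only [map_sum, map_smul, sum_apply, smul_apply,
      smul_eq_mul, mixedHess_apply hΦ]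

end CanonicalTransformation

section WavePackets

variable {d : ℕ}

/-- The constant in the Fourier transform of the Gaussian window. -/
def gaussConst (d : ℕ) : ℂ := ((π : ℂ) / (1 / 2 : ℂ)) ^ ((d : ℂ) / 2)

theorem FT_pk (z : P d) (η : E d) :
    FT d (pk d z) η = gaussConst d * Complex.exp (-Complex.I * (⟪z.1, η - z.2⟫ : ℂ)) *
      Real.exp (-‖η - z.2‖ ^ 2 / 2) := by
  have h := GaussianFourier.integral_cexp_neg_mul_sq_norm_add (V := E d) (b := 1 / 2)
    (by norm_num) (-Complex.I) (η - z.2)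
  rw [FT, ← integral_add_right_eq_self _ z.1]
  have : ∀ v : E d, Complex.exp (-Complex.I * (⟪v + z.1, η⟫ : ℂ)) * pk d z (v + z.1) =
      Complex.exp (-Complex.I * (⟪z.1, η - z.2⟫ : ℂ)) *
        Complex.exp (-(1 / 2) * ‖v‖ ^ 2 + -Complex.I * (⟪η - z.2, v⟫ : ℂ)) := by
    intro v
    rw [pk, Complex.ofReal_exp, ← Complex.exp_add, ← Complex.exp_add, ← Complex.exp_add,
      real_inner_comm v (η - z.2)]
    congr 1
    simp only [inner_add_left, inner_sub_right, add_sub_cancel_right]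
    push_cast
    ring
  simp only [this]
  rw [integral_const_mul, h]
  simp only [gaussConst, finrank_euclideanSpace, Fintype.card_fin]
  rw [Complex.ofReal_exp]
  have e1 : (-Complex.I) ^ 2 * (‖η - z.2‖ : ℂ) ^ 2 / (4 * (1 / 2)) =
      ((-‖η - z.2‖ ^ 2 / 2 : ℝ) : ℂ) := by
    push_cast
    rw [neg_sq, Complex.I_sq]
    ring
  rw [e1]
  ring

/-- The linear part of the phase of a wave-packet matrix coefficient. -/
def packetForm (z w : P d) : P d →L[ℝ] ℝ :=
  (innerSL ℝ w.2).comp (ContinuousLinearMap.fst ℝ (E d) (E d)) +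
    (innerSL ℝ z.1).comp (ContinuousLinearMap.snd ℝ (E d) (E d))

theorem packetForm_apply (z w p : P d) : packetForm z w p = ⟪w.2, p.1⟫ + ⟪z.1, p.2⟫ := by
  simp [packetForm]

/-- A wave-packet matrix coefficient is an oscillatory integral on phase space. -/
theorem norm_matrixCoeff_eq {Φ : P d → ℝ} (hΦ : ContDiff ℝ (⊤ : ℕ∞) Φ) {a : P d → ℂ}
    (ha : Continuous a) {R : ℝ} (haR : ∀ p, ‖a p‖ ≤ R) (z w : P d) :
    ‖∫ x : E d, ((((2 * π) ^ d : ℝ) : ℂ)⁻¹ *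
        ∫ η : E d, Complex.exp (Complex.I * (Φ (x, η) : ℂ)) * a (x, η) *
          FT d (pk d z) η) * pkbar d w x‖ =
      ‖(((2 * π) ^ d : ℝ) : ℂ)⁻¹ * gaussConst d‖ *
        ‖∫ p, oscWeight Φ (packetForm z w) (w.1, z.2) p * a p‖ := by
  have pointwise : ∀ x η : E d,
      Complex.exp (Complex.I * (Φ (x, η) : ℂ)) * a (x, η) * FT d (pk d z) η * pkbar d w x =
        gaussConst d * Complex.exp (Complex.I * (⟪z.1, z.2⟫ : ℂ)) *
          (oscWeight Φ (packetForm z w) (w.1, z.2) (x, η) * a (x, η)) := by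
    intro x η
    have hexp : Complex.exp (Complex.I * (Φ (x, η) : ℂ)) *
        Complex.exp (-Complex.I * (⟪z.1, η - z.2⟫ : ℂ)) * Real.exp (-‖η - z.2‖ ^ 2 / 2) *
          pkbar d w x = Complex.exp (Complex.I * (⟪z.1, z.2⟫ : ℂ)) *
            oscWeight Φ (packetForm z w) (w.1, z.2) (x, η) := by
      simp only [pkbar, oscWeight, Complex.ofReal_exp, ← Complex.exp_add]
      congr 1
      rw [packetForm_apply, real_inner_comm x w.2, ensq, inner_sub_right]
      simp only [Prod.fst_sub, Prod.snd_sub]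
      push_cast
      ring
    rw [FT_pk]
    linear_combination gaussConst d * a (x, η) * hexp
  have hint := integrable_oscWeight_mul (L := packetForm z w) (p₀ := (w.1, z.2)) hΦ ha haR
  have hswap : (∫ x : E d, ((((2 * π) ^ d : ℝ) : ℂ)⁻¹ *
        ∫ η : E d, Complex.exp (Complex.I * (Φ (x, η) : ℂ)) * a (x, η) *
          FT d (pk d z) η) * pkbar d w x) =
      (((2 * π) ^ d : ℝ) : ℂ)⁻¹ * (gaussConst d * Complex.exp (Complex.I * (⟪z.1, z.2⟫ : ℂ)) *
        ∫ p, oscWeight Φ (packetForm z w) (w.1, z.2) p * a p) := by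
    rw [Measure.volume_eq_prod] at hint ⊢
    rw [integral_prod _ hint, ← integral_const_mul, ← integral_const_mul]
    congr 1 with x
    rw [mul_assoc, ← integral_mul_const, ← integral_const_mul]
    simp only [pointwise]
    rw [integral_const_mul, integral_const_mul]
  have hunit : ‖Complex.exp (Complex.I * (⟪z.1, z.2⟫ : ℂ))‖ = 1 := by
    simp [Complex.norm_exp]
  rw [hswap]
  simp only [norm_mul, hunit]
  ring

end WavePackets

theorem add_add_pow_le {a b c : ℝ} (ha : 0 ≤ a) (hb : 0 ≤ b) (hc : 0 ≤ c) (k : ℕ) :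
    (a + b + c) ^ k ≤ 3 ^ k * (a ^ k + b ^ k + c ^ k) := by
  have h : ∀ t, 0 ≤ t → a ≤ t → b ≤ t → c ≤ t → (a + b + c) ^ k ≤ 3 ^ k * t ^ k := by
    intro t _ h1 h2 h3
    rw [← mul_pow]
    exact pow_le_pow_left₀ (by positivity) (by linarith) k
  have ha' := pow_nonneg ha k
  have hb' := pow_nonneg hb k
  have hc' := pow_nonneg hc k
  have h3 : (0 : ℝ) ≤ 3 ^ k := by positivity
  rcases le_total a b with hab | hab <;> rcases le_total b c with hbc | hbc <;>
    rcases le_total a c with hac | hac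
  all_goals first
    | exact (h a ha (by linarith) (by linarith) (by linarith)).trans (by gcongr; linarith)
    | exact (h b hb (by linarith) (by linarith) (by linarith)).trans (by gcongr; linarith)
    | exact (h c hc (by linarith) (by linarith) (by linarith)).trans (by gcongr; linarith)

theorem norm_pow_mul_le_of_forall_direction {V : Type*} [NormedAddCommGroup V]
    [InnerProductSpace ℝ V] {v : V} {n : ℕ} {J D : ℝ}
    (h : ∀ u : V, ‖u‖ ≤ 1 → |⟪v, u⟫| ^ n * J ≤ D) : ‖v‖ ^ n * J ≤ D := by
  have h1 : ‖‖v‖⁻¹ • v‖ ≤ 1 := by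
    rw [norm_smul, norm_inv, norm_norm]
    exact inv_mul_le_one
  have h2 : ⟪v, ‖v‖⁻¹ • v⟫ = ‖v‖ := by
    rw [real_inner_smul_right, real_inner_self_eq_norm_sq]
    by_cases hv : ‖v‖ = 0
    · simp [hv]
    · field_simp
  simpa [h2] using h _ h1

/-- a Fourier integral operator
`T f (x) = (2π)^{-d} ∫ exp(iΦ(x,η)) a(x,η) ℱf(η) dη` with a tame phase `Φ`
(derivative bounds `B` for orders between `2` and `M`, mixed Hessian determinant
`≥ δ`) and amplitude `a ∈ S⁰₀,₀` belongs to `FIO(χ)`, `χ` the canonical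
transformation generated by `Φ` (`χ(∇_ηΦ(x,η), η) = (x, ∇_xΦ(x,η))`): for every
`m ≥ 0` the Gaussian wave-packet matrix of `T` is bounded by
`C·‖a‖_{m'}·⟨w - χ z⟩^{-m}`, with `m', M` depending only on `m` (and `d`) and `C`
depending only on `m, d, δ, B`.  The bound `R` plays the role of `‖a‖_{m'}`. -/
theorem stmt14 (d : ℕ) (hd : 1 ≤ d) :
    ∀ m : ℝ, 0 ≤ m →
    ∃ m' M : ℕ, 2 ≤ M ∧
    ∀ δ > (0 : ℝ), ∀ B > (0 : ℝ), ∃ C > (0 : ℝ),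
    ∀ Φ : P d → ℝ, ContDiff ℝ (⊤ : ℕ∞) Φ →
      (∀ i : ℕ, 2 ≤ i → i ≤ M → ∀ zz : P d, ‖iteratedFDeriv ℝ i Φ zz‖ ≤ B) →
      (∀ x η : E d, δ ≤ |(mixedHess d Φ x η).det|) →
    ∀ χ : P d → P d,
      (∀ x η : E d,
        χ (gradient (fun η' => Φ (x, η')) η, η) = (x, gradient (fun x' => Φ (x', η)) x)) →
    ∀ a : P d → ℂ, ContDiff ℝ (⊤ : ℕ∞) a →
    ∀ R : ℝ, 0 ≤ R →
      (∀ i : ℕ, i ≤ m' → ∀ zz : P d, ‖iteratedFDeriv ℝ i a zz‖ ≤ R) →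
    ∀ z w : P d,
      ‖∫ x : E d,
          ((((2 * π) ^ d : ℝ) : ℂ)⁻¹ *
            ∫ η : E d, Complex.exp (Complex.I * (Φ (x, η) : ℂ)) * a (x, η) *
              FT d (pk d z) η) * pkbar d w x‖ ≤
        C * R * (1 + ensq (w - χ z)) ^ (-(m / 2)) := by
  intro m hm
  set k := ⌈m / 2⌉₊
  refine ⟨2 * k, 2 * k + 2, by lia, fun δ hδ B hB => ?_⟩
  obtain ⟨K, hK, hsolve⟩ := exists_gradient_eq d hδ B
  obtain ⟨K₀, hK₀, hosc₀⟩ := exists_oscillatory_bound d 0 hB.le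
  obtain ⟨K₁, hK₁, hosc₁⟩ := exists_oscillatory_bound d (2 * k) hB.le
  set c := ‖(((2 * π) ^ d : ℝ) : ℂ)⁻¹ * gaussConst d‖
  set A := 2 + 4 * K ^ 2 + 8 * K ^ 2 * B ^ 2
  have hc : 0 ≤ c := norm_nonneg _
  have hA : 1 ≤ A := by
    have : 0 ≤ 4 * K ^ 2 + 8 * K ^ 2 * B ^ 2 := by positivity
    linarith
  refine ⟨c * ((3 * A) ^ k * (K₀ + K₁ + K₁)) + 1, by positivity, ?_⟩
  intro Φ hΦ hΦB hdet χ hχ a ha R hR haR z w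
  rw [norm_matrixCoeff_eq hΦ ha.continuous (fun p => by simpa using haR 0 (by lia) p)]
  set J := ‖∫ p, oscWeight Φ (packetForm z w) (w.1, z.2) p * a p‖
  have hJ : 0 ≤ J := norm_nonneg _
  have hd1 : Differentiable ℝ Φ := hΦ.differentiable (by simp)
  have hΦ2 : ∀ p, ‖fderiv ℝ (fderiv ℝ Φ) p‖ ≤ B := fun p => by
    rw [← norm_iteratedFDeriv_one, norm_iteratedFDeriv_fderiv]
    exact hΦB 2 le_rfl (by lia) p
  obtain ⟨x₀, hx₀, hdist⟩ := hsolve Φ hΦ hΦ2 hdet w.1 z.2 z.1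
  set v₁ := gradient (fun x' => Φ (x', z.2)) w.1 - w.2
  set v₂ := gradient (fun η' => Φ (w.1, η')) z.2 - z.1
  have hgrad : ∀ e : P d, fderiv ℝ Φ (w.1, z.2) e - packetForm z w e =
      ⟪v₁, e.1⟫ + ⟪v₂, e.2⟫ := by
    intro e
    rw [fderiv_apply_eq_inner_gradient hd1, packetForm_apply, inner_sub_left, inner_sub_left]
    ring
  have hosc : ∀ e : P d, ‖e‖ ≤ 1 → |⟪v₁, e.1⟫ + ⟪v₂, e.2⟫| ^ (2 * k) * J ≤ K₁ * R := by
    intro e he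
    rw [← hgrad]
    exact hosc₁ Φ hΦ hΦB a ha R hR haR _ _ e he
  have hJ0 : J ≤ K₀ * R := by
    simpa using hosc₀ Φ hΦ (fun i hi hi' => hΦB i hi (by lia)) a ha R hR
      (fun i hi => haR i (by lia)) (packetForm z w) (w.1, z.2) 0 (by simp)
  have hJ1 : ‖v₁‖ ^ (2 * k) * J ≤ K₁ * R := norm_pow_mul_le_of_forall_direction fun u hu => by
    simpa using hosc (u, 0) (by simpa [Prod.norm_def] using hu)
  have hJ2 : ‖v₂‖ ^ (2 * k) * J ≤ K₁ * R := norm_pow_mul_le_of_forall_direction fun u hu => by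
    simpa using hosc (0, u) (by simpa [Prod.norm_def] using hu)
  have hχz : χ z = (x₀, gradient (fun x' => Φ (x', z.2)) x₀) := by
    rw [← hχ x₀ z.2, hx₀]
  have hens : 1 + ensq (w - χ z) ≤ A * (1 + ‖v₁‖ ^ 2 + ‖v₂‖ ^ 2) := by
    have h1 : ‖w.1 - x₀‖ ≤ 2 * K * ‖v₂‖ := by rwa [norm_sub_rev]
    have h2 : ‖w.2 - gradient (fun x' => Φ (x', z.2)) x₀‖ ≤ ‖v₁‖ + B * (2 * K * ‖v₂‖) := by
      have h3 := norm_gradient_fst_sub_le hΦ hΦ2 w.1 x₀ z.2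
      have h4 : w.2 - gradient (fun x' => Φ (x', z.2)) x₀ = -v₁ +
          (gradient (fun x' => Φ (x', z.2)) w.1 - gradient (fun x' => Φ (x', z.2)) x₀) := by
        simp only [v₁]
        abel
      rw [h4]
      refine (norm_add_le _ _).trans ?_
      rw [norm_neg]
      gcongr
      exact h3.trans (by gcongr)
    have h5 := pow_le_pow_left₀ (norm_nonneg _) h1 2
    have h6 := pow_le_pow_left₀ (norm_nonneg _) h2 2
    have h7 : ensq (w - χ z) = ‖w.1 - x₀‖ ^ 2 +
        ‖w.2 - gradient (fun x' => Φ (x', z.2)) x₀‖ ^ 2 := by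
      rw [hχz]
      rfl
    rw [h7]
    have h8 : (‖v₁‖ + B * (2 * K * ‖v₂‖)) ^ 2 ≤
        2 * ‖v₁‖ ^ 2 + 8 * K ^ 2 * B ^ 2 * ‖v₂‖ ^ 2 := by
      nlinarith [sq_nonneg (‖v₁‖ - B * (2 * K * ‖v₂‖))]
    have h9 : 0 ≤ (4 * K ^ 2 + 8 * K ^ 2 * B ^ 2) * ‖v₁‖ ^ 2 := by positivity
    have h10 : 0 ≤ 2 * ‖v₂‖ ^ 2 := by positivity
    simp only [A] at hA ⊢
    nlinarith
  have hpos : 1 ≤ 1 + ensq (w - χ z) := by linarith [ensq_nonneg (w - χ z)]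
  have hmain : (1 + ensq (w - χ z)) ^ (m / 2) * J ≤ (3 * A) ^ k * (K₀ + K₁ + K₁) * R := by
    calc (1 + ensq (w - χ z)) ^ (m / 2) * J
        ≤ (1 + ensq (w - χ z)) ^ k * J := by
          gcongr
          rw [← Real.rpow_natCast]
          exact Real.rpow_le_rpow_of_exponent_le hpos (Nat.le_ceil _)
      _ ≤ (A * (1 + ‖v₁‖ ^ 2 + ‖v₂‖ ^ 2)) ^ k * J := by gcongr
      _ ≤ A ^ k * (3 ^ k * (1 ^ k + (‖v₁‖ ^ 2) ^ k + (‖v₂‖ ^ 2) ^ k)) * J := by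
          rw [mul_pow]
          gcongr
          exact add_add_pow_le zero_le_one (by positivity) (by positivity) k
      _ = (3 * A) ^ k * (J + ‖v₁‖ ^ (2 * k) * J + ‖v₂‖ ^ (2 * k) * J) := by
          rw [mul_pow, one_pow, pow_mul, pow_mul]
          ring
      _ ≤ (3 * A) ^ k * (K₀ * R + K₁ * R + K₁ * R) := by gcongr
      _ = _ := by ring
  have hrpow : 0 < (1 + ensq (w - χ z)) ^ (m / 2) := by positivity
  rw [Real.rpow_neg (by linarith), ← div_eq_mul_inv, le_div_iff₀ hrpow]
  calc c * J * (1 + ensq (w - χ z)) ^ (m / 2)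
      = c * ((1 + ensq (w - χ z)) ^ (m / 2) * J) := by ring
    _ ≤ c * ((3 * A) ^ k * (K₀ + K₁ + K₁) * R) := by gcongr
    _ ≤ _ := by linarith
end
end

section
/- Let d ≥ 1, 1 < p ≤ 2, and k₁, k₂ ∈ ℝ. Then there exists a constant C > 0 such that ‖(1−Δ)^{k₂/2}(ℱf)‖_{L^p(ℝ^d)} ≤ C·‖(1−Δ)^{k₁/2} f‖_{L^p(ℝ^d)} for every Schwartz function f on ℝ^d, if and only if k₁ ≥ 2d(1/p − 1/2) and k₂ ≤ 0. -/
open MeasureTheory Complex Real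
open scoped ENNReal RealInnerProductSpace

noncomputable section

/-- The Bessel potential `(1-Δ)^{k/2} u = ℱ⁻¹((1+|ξ|²)^{k/2} ℱu)`. -/
def bessel (d : ℕ) (k : ℝ) (u : E d → ℂ) (x : E d) : ℂ :=
  (((2 * π) ^ d : ℝ) : ℂ)⁻¹ *
    ∫ ξ, Complex.exp (Complex.I * (⟪x, ξ⟫ : ℂ)) * (((1 + ‖ξ‖ ^ 2) ^ (k / 2) : ℝ) : ℂ) *
      FT d u ξ

open scoped FourierTransform SchwartzMap ContDiff

/-- Dilation `x ↦ c x` as a continuous linear equivalence. -/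
def dilation (d : ℕ) (c : ℝ) (hc : c ≠ 0) : E d ≃L[ℝ] E d :=
  ContinuousLinearEquiv.smulLeft (Units.mk0 c hc)

/-- The Fourier transform `FT` on Schwartz functions. -/
def schwartzFT (d : ℕ) (f : 𝓢(E d, ℂ)) : 𝓢(E d, ℂ) :=
  SchwartzMap.compCLMOfContinuousLinearEquiv ℂ
    (dilation d (2 * π)⁻¹ (inv_ne_zero Real.two_pi_pos.ne')) (𝓕 f)

/-- The inverse of `schwartzFT`. -/
def schwartzInvFT (d : ℕ) (f : 𝓢(E d, ℂ)) : 𝓢(E d, ℂ) :=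
  𝓕⁻ (SchwartzMap.compCLMOfContinuousLinearEquiv ℂ (dilation d (2 * π) Real.two_pi_pos.ne') f)

/-- Multiplication of a Schwartz function by `(1 + |x|²)^{k/2}`. -/
def schwartzWeight (d : ℕ) (k : ℝ) (f : 𝓢(E d, ℂ)) : 𝓢(E d, ℂ) :=
  SchwartzMap.smulLeftCLM ℂ (fun x : E d ↦ (((1 + ‖x‖ ^ 2) ^ (k / 2) : ℝ) : ℂ)) f

/-- The Bessel potential on Schwartz functions. -/
def schwartzBessel (d : ℕ) (k : ℝ) (f : 𝓢(E d, ℂ)) : 𝓢(E d, ℂ) :=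
  schwartzInvFT d (schwartzWeight d k (schwartzFT d f))

lemma dilation_apply (d : ℕ) (c : ℝ) (hc : c ≠ 0) (x : E d) : dilation d c hc x = c • x := rfl

lemma FT_eq_fourier (d : ℕ) (u : E d → ℂ) (ξ : E d) : FT d u ξ = 𝓕 u ((2 * π)⁻¹ • ξ) := by
  rw [FT, Real.fourier_eq']
  congr 1
  ext x
  rw [smul_eq_mul, real_inner_smul_right]
  congr 2
  push_cast
  have := Complex.ofReal_ne_zero.mpr Real.pi_ne_zero
  field_simp

lemma schwartzFT_apply (d : ℕ) (f : 𝓢(E d, ℂ)) (ξ : E d) : schwartzFT d f ξ = FT d f ξ := by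
  rw [FT_eq_fourier]
  rfl

lemma coe_schwartzFT (d : ℕ) (f : 𝓢(E d, ℂ)) : ⇑(schwartzFT d f) = FT d f :=
  funext (schwartzFT_apply d f)

lemma schwartzInvFT_apply (d : ℕ) (f : 𝓢(E d, ℂ)) (x : E d) :
    schwartzInvFT d f x =
      (((2 * π) ^ d : ℝ) : ℂ)⁻¹ * ∫ ξ, Complex.exp (Complex.I * (⟪x, ξ⟫ : ℂ)) * f ξ := by
  rw [schwartzInvFT, SchwartzMap.fourierInv_coe, Real.fourierInv_eq']
  have h := Measure.integral_comp_smul (volume : Measure (E d))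
    (fun ξ ↦ Complex.exp (Complex.I * (⟪x, ξ⟫ : ℂ)) * f ξ) (2 * π)
  rw [finrank_euclideanSpace_fin, abs_of_pos (by positivity)] at h
  rw [← Complex.ofReal_inv, ← Complex.real_smul, ← h]
  congr 1
  ext v
  rw [smul_eq_mul, SchwartzMap.compCLMOfContinuousLinearEquiv_apply, Function.comp_apply,
    dilation_apply, real_inner_smul_right, real_inner_comm x v]
  congr 2
  ring

lemma schwartzInvFT_eq_FT_neg (d : ℕ) (f : 𝓢(E d, ℂ)) (x : E d) :
    schwartzInvFT d f x = (((2 * π) ^ d : ℝ) : ℂ)⁻¹ * FT d f (-x) := by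
  rw [schwartzInvFT_apply, FT]
  congr 2
  ext ξ
  rw [inner_neg_right, real_inner_comm x ξ]
  push_cast
  ring_nf

lemma schwartzFT_schwartzInvFT (d : ℕ) (f : 𝓢(E d, ℂ)) :
    schwartzFT d (schwartzInvFT d f) = f := by
  ext x
  rw [schwartzFT, schwartzInvFT, FourierTransform.fourier_fourierInv_eq]
  simp only [SchwartzMap.compCLMOfContinuousLinearEquiv_apply, Function.comp_apply,
    dilation_apply, smul_smul]
  rw [mul_inv_cancel₀ Real.two_pi_pos.ne', one_smul]

lemma schwartzInvFT_schwartzFT (d : ℕ) (f : 𝓢(E d, ℂ)) :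
    schwartzInvFT d (schwartzFT d f) = f := by
  have h : SchwartzMap.compCLMOfContinuousLinearEquiv ℂ (dilation d (2 * π) Real.two_pi_pos.ne')
      (schwartzFT d f) = 𝓕 f := by
    ext x
    simp only [schwartzFT, SchwartzMap.compCLMOfContinuousLinearEquiv_apply, Function.comp_apply,
      dilation_apply, smul_smul]
    rw [inv_mul_cancel₀ Real.two_pi_pos.ne', one_smul]
  rw [schwartzInvFT, h, FourierTransform.fourierInv_fourier_eq]

lemma schwartzWeight_apply (d : ℕ) (k : ℝ) (f : 𝓢(E d, ℂ)) (x : E d) :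
    schwartzWeight d k f x = (((1 + ‖x‖ ^ 2) ^ (k / 2) : ℝ) : ℂ) * f x := by
  rw [schwartzWeight, SchwartzMap.smulLeftCLM_apply_apply (by fun_prop), smul_eq_mul]

lemma schwartzWeight_schwartzWeight (d : ℕ) (k l : ℝ) (f : 𝓢(E d, ℂ)) :
    schwartzWeight d k (schwartzWeight d l f) = schwartzWeight d (k + l) f := by
  ext x
  simp only [schwartzWeight_apply]
  rw [← mul_assoc, ← Complex.ofReal_mul, ← Real.rpow_add (by positivity), add_div]

lemma schwartzWeight_zero (d : ℕ) (f : 𝓢(E d, ℂ)) : schwartzWeight d 0 f = f := by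
  ext x
  simp [schwartzWeight_apply]

lemma coe_schwartzBessel (d : ℕ) (k : ℝ) (f : 𝓢(E d, ℂ)) :
    ⇑(schwartzBessel d k f) = bessel d k f := by
  ext x
  rw [schwartzBessel, schwartzInvFT_apply, bessel]
  simp only [schwartzWeight_apply, schwartzFT_apply, mul_assoc]

lemma schwartzFT_schwartzBessel (d : ℕ) (k : ℝ) (f : 𝓢(E d, ℂ)) :
    schwartzFT d (schwartzBessel d k f) = schwartzWeight d k (schwartzFT d f) :=
  schwartzFT_schwartzInvFT d _

lemma schwartzBessel_neg_schwartzBessel (d : ℕ) (k : ℝ) (f : 𝓢(E d, ℂ)) :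
    schwartzBessel d k (schwartzBessel d (-k) f) = f := by
  rw [schwartzBessel, schwartzFT_schwartzBessel, schwartzWeight_schwartzWeight, add_neg_cancel,
    schwartzWeight_zero, schwartzInvFT_schwartzFT]

lemma integral_schwartzFT_mul (d : ℕ) (f g : 𝓢(E d, ℂ)) :
    ∫ x, schwartzFT d f x * g x = ∫ x, f x * schwartzFT d g x := by
  have h := SchwartzMap.integral_fourier_mul_eq f
    (SchwartzMap.compCLMOfContinuousLinearEquiv ℂ (dilation d (2 * π) Real.two_pi_pos.ne') g)
  have h1 := Measure.integral_comp_smul (volume : Measure (E d))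
    (fun ξ ↦ schwartzFT d f ξ * g ξ) (2 * π)
  have h2 : ∀ x, 𝓕 (SchwartzMap.compCLMOfContinuousLinearEquiv ℂ
      (dilation d (2 * π) Real.two_pi_pos.ne') g) x =
      (((2 * π) ^ d : ℝ) : ℂ)⁻¹ * schwartzFT d g x := by
    intro x
    have h3 := schwartzInvFT_eq_FT_neg d g (-x)
    rw [neg_neg, schwartzInvFT, SchwartzMap.fourierInv_apply_eq] at h3
    simpa [schwartzFT_apply, SchwartzMap.fourier_coe] using h3
  have h4 : ∀ x, schwartzFT d f ((2 * π) • x) = 𝓕 f x := by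
    intro x
    rw [schwartzFT, SchwartzMap.compCLMOfContinuousLinearEquiv_apply, Function.comp_apply,
      dilation_apply, smul_smul, inv_mul_cancel₀ Real.two_pi_pos.ne', one_smul]
  simp only [h2, h4] at h h1
  have h5 : ∀ x, (SchwartzMap.compCLMOfContinuousLinearEquiv ℂ
      (dilation d (2 * π) Real.two_pi_pos.ne') g) x = g ((2 * π) • x) := fun x ↦ rfl
  simp only [h5] at h
  rw [h, finrank_euclideanSpace_fin, abs_of_pos (by positivity), Complex.real_smul] at h1
  have h6 : ((((2 * π) ^ d)⁻¹ : ℝ) : ℂ) ≠ 0 := by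
    exact_mod_cast (by positivity : (((2 * π) ^ d)⁻¹ : ℝ) ≠ 0)
  apply mul_left_cancel₀ h6
  rw [← h1, ← integral_const_mul]
  congr 1
  ext x
  push_cast
  ring

/-- `(1-Δ)^{k/2} ℱ f = ℱ ((1+|x|²)^{k/2} f)`. -/
lemma schwartzBessel_schwartzFT (d : ℕ) (k : ℝ) (f : 𝓢(E d, ℂ)) :
    schwartzBessel d k (schwartzFT d f) = schwartzFT d (schwartzWeight d k f) := by
  have h0 : (((2 * π) ^ d : ℝ) : ℂ) ≠ 0 := by
    exact_mod_cast (by positivity : ((2 * π) ^ d : ℝ) ≠ 0)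
  have h1 : ∀ x, schwartzFT d (schwartzFT d f) x = (((2 * π) ^ d : ℝ) : ℂ) * f (-x) := by
    intro x
    have := schwartzInvFT_eq_FT_neg d (schwartzFT d f) (-x)
    rw [schwartzInvFT_schwartzFT, neg_neg] at this
    rw [this, schwartzFT_apply, mul_inv_cancel_left₀ h0]
  ext x
  rw [schwartzBessel, schwartzInvFT_apply, schwartzFT_apply, FT, ← integral_neg_eq_self,
    ← integral_const_mul]
  congr 1
  ext ξ
  rw [schwartzWeight_apply, schwartzWeight_apply, h1, norm_neg, neg_neg, inner_neg_right,
    real_inner_comm x ξ]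
  field_simp
  push_cast
  ring_nf

lemma lintegral_comp_smul_eq (d : ℕ) (f : E d → ℝ≥0∞) {c : ℝ} (hc : 0 < c) :
    ∫⁻ x, f (c • x) = ENNReal.ofReal ((c ^ d)⁻¹) * ∫⁻ x, f x := by
  have h : MeasurableEmbedding (fun x : E d ↦ c • x) :=
    (Homeomorph.smulOfNeZero c hc.ne').measurableEmbedding
  rw [← h.lintegral_map, Measure.map_addHaar_smul _ hc.ne', lintegral_smul_measure,
    finrank_euclideanSpace_fin, abs_of_pos (by positivity), smul_eq_mul]

/-- Plancherel's theorem for `L¹ ∩ L²` functions. -/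
lemma eLpNorm_fourier_eq (d : ℕ) {h : E d → ℂ} (h1 : Integrable h) (h2 : MemLp h 2) :
    eLpNorm (𝓕 h) 2 = eLpNorm h 2 := by
  set H : Lp ℂ 2 (volume : Measure (E d)) := h2.toLp h with hH
  have key : (𝓕 H : Lp ℂ 2 (volume : Measure (E d))) =ᵐ[volume] 𝓕 h := by
    have hc : Continuous (𝓕 h) := VectorFourier.fourierIntegral_continuous
      Real.continuous_fourierChar continuous_inner h1
    apply ae_eq_of_integral_contDiff_smul_eq
    · exact (Lp.memLp _).locallyIntegrable (by norm_num)
    · exact hc.locallyIntegrable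
    · intro g g_smooth g_cpt
      have hg₁ : HasCompactSupport (Complex.ofRealCLM ∘ g) := g_cpt.comp_left rfl
      have hg₂ : ContDiff ℝ ∞ (Complex.ofRealCLM ∘ g) := by fun_prop
      set G : 𝓢(E d, ℂ) := hg₁.toSchwartzMap hg₂ with hG
      have hGg : ∀ x, G x = (g x : ℂ) := fun x ↦ rfl
      have e1 := congrArg (fun T : 𝓢'(E d, ℂ) ↦ T G) (Lp.fourier_toTemperedDistribution_eq H)
      simp only [TemperedDistribution.fourier_apply, Lp.toTemperedDistribution_apply] at e1
      have e2 : ∫ ξ, 𝓕 (G : E d → ℂ) ξ • h ξ = ∫ x, G x • 𝓕 h x := by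
        simpa using! (VectorFourier.integral_fourierIntegral_smul_eq_flip (L := innerₗ (E d))
          Real.continuous_fourierChar continuous_inner G.integrable h1)
      have e3 : ∫ x, (𝓕 G) x • H x = ∫ ξ, 𝓕 (G : E d → ℂ) ξ • h ξ := by
        refine integral_congr_ae ?_
        filter_upwards [h2.coeFn_toLp] with x hx
        rw [hH, hx, SchwartzMap.fourier_coe]
      rw [e3, e2] at e1
      simpa [hGg] using e1.symm
  rw [← eLpNorm_congr_ae key, ← eLpNorm_congr_ae h2.coeFn_toLp, ← Lp.enorm_def, ← Lp.enorm_def,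
    enorm_eq_iff_norm_eq, Lp.norm_fourier_eq]

lemma lintegral_enorm_FT_sq (d : ℕ) {h : E d → ℂ} (h1 : Integrable h) (h2 : MemLp h 2) :
    ∫⁻ ξ, ‖FT d h ξ‖ₑ ^ (2 : ℝ) = ENNReal.ofReal ((2 * π) ^ d) * ∫⁻ x, ‖h x‖ₑ ^ (2 : ℝ) := by
  have h3 := eLpNorm_fourier_eq d h1 h2
  rw [eLpNorm_eq_lintegral_rpow_enorm_toReal (by norm_num) (by norm_num),
    eLpNorm_eq_lintegral_rpow_enorm_toReal (by norm_num) (by norm_num)] at h3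
  have h4 := (ENNReal.rpow_left_injective (by norm_num : (1 / (2 : ℝ≥0∞).toReal) ≠ 0)) h3
  simp only [ENNReal.toReal_ofNat] at h4
  simp only [FT_eq_fourier]
  rw [lintegral_comp_smul_eq d (fun ξ ↦ ‖𝓕 h ξ‖ₑ ^ (2 : ℝ)) (by positivity), h4, inv_pow, inv_inv]

lemma enorm_FT_le (d : ℕ) (h : E d → ℂ) (ξ : E d) : ‖FT d h ξ‖ₑ ≤ ∫⁻ x, ‖h x‖ₑ := by
  refine (enorm_integral_le_lintegral_enorm _).trans (le_of_eq ?_)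
  congr 1
  ext x
  rw [enorm_mul]
  have : ‖Complex.exp (-Complex.I * (⟪x, ξ⟫ : ℂ))‖ₑ = 1 := by
    rw [← ofReal_norm, Complex.norm_exp]
    simp
  rw [this, one_mul]

lemma FT_add (d : ℕ) {g h : E d → ℂ} (hg : Integrable g) (hh : Integrable h) (ξ : E d) :
    FT d (g + h) ξ = FT d g ξ + FT d h ξ := by
  simp only [FT_eq_fourier]
  rw [Real.fourier_eq, Real.fourier_eq, Real.fourier_eq, ← integral_add]
  · simp
  · simpa using (Real.fourierIntegral_convergent_iff ((2 * π)⁻¹ • ξ)).2 hg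
  · simpa using (Real.fourierIntegral_convergent_iff ((2 * π)⁻¹ • ξ)).2 hh

lemma continuous_FT (d : ℕ) {g : E d → ℂ} (hg : Integrable g) : Continuous (FT d g) := by
  have hc : Continuous (𝓕 g) := VectorFourier.fourierIntegral_continuous
      Real.continuous_fourierChar continuous_inner hg
  simp only [funext (FT_eq_fourier d g)]
  fun_prop

/-- The measure `(1 + |ξ|²)^{-d} dξ`. -/
def paleyMeasure (d : ℕ) : Measure (E d) :=
  volume.withDensity fun ξ ↦ ENNReal.ofReal (((1 + ‖ξ‖ ^ 2) ^ d)⁻¹)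

lemma measurable_paleyDensity (d : ℕ) :
    Measurable fun ξ : E d ↦ ENNReal.ofReal (((1 + ‖ξ‖ ^ 2) ^ d)⁻¹) := by fun_prop

lemma lintegral_paleyDensity_ne_top {d : ℕ} (hd : 1 ≤ d) :
    ∫⁻ ξ : E d, ENNReal.ofReal (((1 + ‖ξ‖ ^ 2) ^ d)⁻¹) ≠ ⊤ := by
  have h := integrable_rpow_neg_one_add_norm_sq (E := E d) (μ := volume) (r := 2 * d) (by
    rw [finrank_euclideanSpace_fin]
    have : (1 : ℝ) ≤ d := by exact_mod_cast hd
    linarith)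
  have h2 := h.lintegral_lt_top.ne
  convert h2 using 4 with ξ
  rw [show (-(2 * (d : ℝ)) / 2) = -(d : ℝ) by ring, Real.rpow_neg (by positivity),
    Real.rpow_natCast]

lemma paleyMeasure_weight_gt_le (d : ℕ) {R : ℝ} (hR : 0 < R) :
    paleyMeasure d {ξ | R ^ 2 < 1 + ‖ξ‖ ^ 2} ≤
      (ENNReal.ofReal (2 ^ d) * ∫⁻ ξ : E d, ENNReal.ofReal (((1 + ‖ξ‖ ^ 2) ^ d)⁻¹)) *
        ENNReal.ofReal ((R ^ d)⁻¹) := by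
  have hS : MeasurableSet {ξ : E d | R ^ 2 < 1 + ‖ξ‖ ^ 2} :=
    measurableSet_lt (by fun_prop) (by fun_prop)
  have h1 : paleyMeasure d {ξ | R ^ 2 < 1 + ‖ξ‖ ^ 2} ≤
      ∫⁻ ξ : E d, ENNReal.ofReal (2 ^ d) * ENNReal.ofReal (((R ^ 2 + ‖ξ‖ ^ 2) ^ d)⁻¹) := by
    rw [paleyMeasure, withDensity_apply _ hS]
    refine (setLIntegral_mono (by fun_prop) fun ξ hξ ↦ ?_).trans (setLIntegral_le_lintegral _ _)
    rw [← ENNReal.ofReal_mul (by positivity)]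
    apply ENNReal.ofReal_le_ofReal
    rw [← div_eq_mul_inv, inv_eq_one_div, div_le_div_iff₀ (by positivity) (by positivity), one_mul,
      ← mul_pow]
    have : R ^ 2 < 1 + ‖ξ‖ ^ 2 := hξ
    gcongr
    linarith
  have h2 := lintegral_comp_smul_eq d
    (fun ξ ↦ ENNReal.ofReal (((R ^ 2 + ‖ξ‖ ^ 2) ^ d)⁻¹)) hR
  have h3 : ∀ ξ : E d, ENNReal.ofReal (((R ^ 2 + ‖R • ξ‖ ^ 2) ^ d)⁻¹) =
      ENNReal.ofReal ((R ^ d)⁻¹) * (ENNReal.ofReal ((R ^ d)⁻¹) *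
        ENNReal.ofReal (((1 + ‖ξ‖ ^ 2) ^ d)⁻¹)) := by
    intro ξ
    rw [← ENNReal.ofReal_mul (by positivity), ← ENNReal.ofReal_mul (by positivity), norm_smul,
      Real.norm_of_nonneg hR.le, ← mul_inv, ← mul_inv, ← mul_pow, ← mul_pow]
    ring_nf
  simp only [h3] at h2
  rw [lintegral_const_mul _ (by fun_prop), lintegral_const_mul _ (by fun_prop)] at h2
  have h4 := (ENNReal.mul_right_inj (by simpa using by positivity) ENNReal.ofReal_ne_top).1 h2
  rw [lintegral_const_mul _ (by fun_prop), ← h4] at h1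
  exact h1.trans (le_of_eq (by ring))

lemma paleyMeasure_rpow_gt_le {d : ℕ} (hd : 1 ≤ d) {β : ℝ} (hβ : 0 < β) :
    paleyMeasure d {ξ | β < (1 + ‖ξ‖ ^ 2) ^ ((d : ℝ) / 2)} ≤
      (ENNReal.ofReal (2 ^ d) * ∫⁻ ξ : E d, ENNReal.ofReal (((1 + ‖ξ‖ ^ 2) ^ d)⁻¹)) *
        ENNReal.ofReal β⁻¹ := by
  have hd0 : (d : ℝ) ≠ 0 := by positivity
  have h := paleyMeasure_weight_gt_le d (Real.rpow_pos_of_pos hβ (1 / d))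
  rw [← Real.rpow_natCast (β ^ (1 / (d : ℝ))) d, ← Real.rpow_mul hβ.le,
    one_div_mul_cancel hd0, Real.rpow_one] at h
  refine (measure_mono fun ξ (hξ : β < _) ↦ ?_).trans h
  have h1 := Real.rpow_lt_rpow hβ.le hξ (by positivity : (0 : ℝ) < 2 / d)
  rw [← Real.rpow_mul (by positivity), div_mul_div_comm, mul_comm (d : ℝ) 2,
    div_self (mul_ne_zero two_ne_zero hd0), Real.rpow_one] at h1
  change (β ^ (1 / (d : ℝ))) ^ 2 < _
  rw [← Real.rpow_natCast, ← Real.rpow_mul hβ.le]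
  convert h1 using 2
  push_cast
  ring

/-- The weak `(1,1)` estimate behind Paley's inequality. -/
lemma paley_weak_one_one {d : ℕ} (hd : 1 ≤ d) {g : E d → ℂ} (hg : Integrable g) {α : ℝ}
    (hα : 0 < α) :
    paleyMeasure d {ξ | α < (1 + ‖ξ‖ ^ 2) ^ ((d : ℝ) / 2) * ‖FT d g ξ‖} ≤
      (ENNReal.ofReal (2 ^ d) * ∫⁻ ξ : E d, ENNReal.ofReal (((1 + ‖ξ‖ ^ 2) ^ d)⁻¹)) *
        (ENNReal.ofReal α⁻¹ * ∫⁻ x, ‖g x‖ₑ) := by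
  have hfin : ∫⁻ x, ‖g x‖ₑ ≠ ⊤ := hg.2.ne
  set m : ℝ := (∫⁻ x, ‖g x‖ₑ).toReal with hm
  have hFT : ∀ ξ, ‖FT d g ξ‖ ≤ m := by
    intro ξ
    rw [← toReal_enorm]
    exact ENNReal.toReal_mono hfin (enorm_FT_le d g ξ)
  rcases (ENNReal.toReal_nonneg : 0 ≤ m).eq_or_lt with h0 | h0
  · have : {ξ : E d | α < (1 + ‖ξ‖ ^ 2) ^ ((d : ℝ) / 2) * ‖FT d g ξ‖} = ∅ := by
      ext ξ
      have h2 : ‖FT d g ξ‖ = 0 := le_antisymm (h0 ▸ hFT ξ) (norm_nonneg _)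
      simp [h2, hα.le]
    simp [this]
  · refine (measure_mono fun ξ (hξ : α < _) ↦ ?_).trans
      ((paleyMeasure_rpow_gt_le hd (div_pos hα h0)).trans (le_of_eq ?_))
    · change α / m < _
      rw [div_lt_iff₀ h0]
      exact hξ.trans_le (mul_le_mul_of_nonneg_left (hFT ξ) (by positivity))
    · rw [inv_div, div_eq_inv_mul, ENNReal.ofReal_mul (by positivity),
        ENNReal.ofReal_toReal hfin]

/-- The strong `(2,2)` estimate behind Paley's inequality. -/
lemma paley_strong_two_two (d : ℕ) {g : E d → ℂ} (hg : Integrable g) (hg2 : MemLp g 2) :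
    ∫⁻ ξ, ENNReal.ofReal ((1 + ‖ξ‖ ^ 2) ^ ((d : ℝ) / 2) * ‖FT d g ξ‖) ^ (2 : ℝ) ∂(paleyMeasure d) =
      ENNReal.ofReal ((2 * π) ^ d) * ∫⁻ x, ‖g x‖ₑ ^ (2 : ℝ) := by
  have hc := continuous_FT d hg
  rw [← lintegral_enorm_FT_sq d hg hg2, paleyMeasure,
    lintegral_withDensity_eq_lintegral_mul _ (measurable_paleyDensity d) (by fun_prop)]
  congr 1
  ext ξ
  rw [Pi.mul_apply, ENNReal.ofReal_mul (by positivity), ENNReal.mul_rpow_of_nonneg _ _ (by norm_num),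
    ← mul_assoc, ofReal_norm, ENNReal.ofReal_rpow_of_nonneg (by positivity) (by norm_num),
    ← ENNReal.ofReal_mul (by positivity), ← Real.rpow_mul (by positivity),
    div_mul_cancel₀ _ two_ne_zero, Real.rpow_natCast, inv_mul_cancel₀ (by positivity),
    ENNReal.ofReal_one, one_mul]

/-- The weak `(2,2)` estimate behind Paley's inequality. -/
lemma paley_weak_two_two (d : ℕ) {g : E d → ℂ} (hg : Integrable g) (hg2 : MemLp g 2) {α : ℝ}
    (hα : 0 < α) :
    paleyMeasure d {ξ | α < (1 + ‖ξ‖ ^ 2) ^ ((d : ℝ) / 2) * ‖FT d g ξ‖} ≤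
      ENNReal.ofReal ((2 * π) ^ d) *
        (ENNReal.ofReal (α ^ (-2 : ℝ)) * ∫⁻ x, ‖g x‖ₑ ^ (2 : ℝ)) := by
  have hc := continuous_FT d hg
  have h := meas_ge_le_lintegral_div (μ := paleyMeasure d)
    (f := fun ξ ↦ ENNReal.ofReal ((1 + ‖ξ‖ ^ 2) ^ ((d : ℝ) / 2) * ‖FT d g ξ‖) ^ (2 : ℝ))
    (by fun_prop) (ε := ENNReal.ofReal α ^ (2 : ℝ)) (by simp [hα]) (by simp)
  refine (measure_mono fun ξ (hξ : α < _) ↦ ?_).trans (h.trans (le_of_eq ?_))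
  · exact ENNReal.rpow_le_rpow (ENNReal.ofReal_le_ofReal hξ.le) (by norm_num)
  · rw [paley_strong_two_two d hg hg2, ENNReal.div_eq_inv_mul, ← ENNReal.rpow_neg,
      ENNReal.ofReal_rpow_of_pos hα]
    ring

lemma lintegral_Ioi_ite_lt_rpow {p : ℝ} (hp : 1 < p) {b : ℝ} (hb : 0 ≤ b) :
    ∫⁻ t in Set.Ioi (0 : ℝ), (if t < b then ENNReal.ofReal (t ^ (p - 2)) else 0) =
      ENNReal.ofReal (b ^ (p - 1) / (p - 1)) := by
  have h1 : ∀ t : ℝ, (if t < b then ENNReal.ofReal (t ^ (p - 2)) else 0) =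
      (Set.Iio b).indicator (fun t ↦ ENNReal.ofReal (t ^ (p - 2))) t := by
    intro t
    simp [Set.indicator_apply]
  simp only [h1]
  rw [setLIntegral_indicator measurableSet_Iio, Set.Iio_inter_Ioi, restrict_Ioo_eq_restrict_Ioc]
  have hi := (intervalIntegrable_iff_integrableOn_Ioc_of_le hb).1
    (intervalIntegral.intervalIntegrable_rpow' (a := 0) (b := b) (by linarith : -1 < p - 2))
  rw [← ofReal_integral_eq_lintegral_ofReal hi
    ((ae_restrict_mem measurableSet_Ioc).mono fun t ht ↦ Real.rpow_nonneg ht.1.le _),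
    ← intervalIntegral.integral_of_le hb, integral_rpow (Or.inl (by linarith)),
    show p - 2 + 1 = p - 1 by ring, Real.zero_rpow (by linarith), sub_zero]

lemma lintegral_Ioi_ite_ge_rpow {p : ℝ} (hp : p < 2) {b : ℝ} (hb : 0 < b) :
    ∫⁻ t in Set.Ioi (0 : ℝ), (if b ≤ t then ENNReal.ofReal (t ^ (p - 3)) else 0) =
      ENNReal.ofReal (b ^ (p - 2) / (2 - p)) := by
  have h1 : ∀ t : ℝ, (if b ≤ t then ENNReal.ofReal (t ^ (p - 3)) else 0) =
      (Set.Ici b).indicator (fun t ↦ ENNReal.ofReal (t ^ (p - 3))) t := by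
    intro t
    simp [Set.indicator_apply]
  simp only [h1]
  rw [setLIntegral_indicator measurableSet_Ici,
    Set.inter_eq_left.2 (Set.Ici_subset_Ioi.2 hb), ← restrict_Ioi_eq_restrict_Ici]
  rw [← ofReal_integral_eq_lintegral_ofReal (integrableOn_Ioi_rpow_of_lt (by linarith) hb)
    ((ae_restrict_mem measurableSet_Ioi).mono fun t ht ↦ Real.rpow_nonneg (hb.trans ht).le _),
    integral_Ioi_rpow_of_lt (by linarith) hb, show p - 3 + 1 = p - 2 by ring, neg_div,
    ← div_neg, neg_sub]

lemma measurable_level_above {d : ℕ} {g : E d → ℂ} (hg : Continuous g) (p : ℝ) :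
    Measurable fun z : ℝ × E d ↦
      (if z.1 < ‖g z.2‖ then ENNReal.ofReal (z.1 ^ (p - 2)) else 0) * ‖g z.2‖ₑ := by
  have hgm : Measurable g := hg.measurable
  refine (Measurable.ite ?_ (by fun_prop) measurable_const).mul (by fun_prop)
  exact measurableSet_lt (by fun_prop) (by fun_prop)

lemma measurable_level_below {d : ℕ} {g : E d → ℂ} (hg : Continuous g) (p : ℝ) :
    Measurable fun z : ℝ × E d ↦
      (if ‖g z.2‖ ≤ z.1 then ENNReal.ofReal (z.1 ^ (p - 3)) else 0) * ‖g z.2‖ₑ ^ (2 : ℝ) := by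
  have hgm : Measurable g := hg.measurable
  refine (Measurable.ite ?_ (by fun_prop) measurable_const).mul (by fun_prop)
  exact measurableSet_le (by fun_prop) (by fun_prop)

lemma lintegral_level_above {d : ℕ} {p : ℝ} (hp : 1 < p) {g : E d → ℂ} (hg : Continuous g) :
    ∫⁻ t in Set.Ioi (0 : ℝ), ∫⁻ x, (if t < ‖g x‖ then ENNReal.ofReal (t ^ (p - 2)) else 0) * ‖g x‖ₑ
      = ENNReal.ofReal (p - 1)⁻¹ * ∫⁻ x, ENNReal.ofReal (‖g x‖ ^ p) := by
  rw [lintegral_lintegral_swap (measurable_level_above hg p).aemeasurable, ← lintegral_const_mul _ (by fun_prop)]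
  congr 1
  ext x
  rw [lintegral_mul_const _ (Measurable.ite (measurableSet_lt (by fun_prop) (by fun_prop))
    (by fun_prop) measurable_const), lintegral_Ioi_ite_lt_rpow hp (norm_nonneg _), ← ofReal_norm,
    ← ENNReal.ofReal_mul (div_nonneg (by positivity) (by linarith)),
    ← ENNReal.ofReal_mul (inv_nonneg.2 (by linarith))]
  congr 1
  rcases (norm_nonneg (g x)).eq_or_lt with h0 | h0
  · rw [← h0, Real.zero_rpow (by linarith : p ≠ 0)]
    simp
  · rw [Real.rpow_sub_one h0.ne']
    field_simp

lemma lintegral_level_below {d : ℕ} {p : ℝ} (hp : 1 < p) (hp2 : p < 2) {g : E d → ℂ}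
    (hg : Continuous g) :
    ∫⁻ t in Set.Ioi (0 : ℝ), ∫⁻ x,
      (if ‖g x‖ ≤ t then ENNReal.ofReal (t ^ (p - 3)) else 0) * ‖g x‖ₑ ^ (2 : ℝ)
      = ENNReal.ofReal (2 - p)⁻¹ * ∫⁻ x, ENNReal.ofReal (‖g x‖ ^ p) := by
  rw [lintegral_lintegral_swap (measurable_level_below hg p).aemeasurable, ← lintegral_const_mul _ (by fun_prop)]
  congr 1
  ext x
  rw [lintegral_mul_const _ (Measurable.ite (measurableSet_le (by fun_prop) (by fun_prop))
    (by fun_prop) measurable_const)]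
  rcases (norm_nonneg (g x)).eq_or_lt with h0 | h0
  · rw [← ofReal_norm, ← h0, Real.zero_rpow (by linarith)]
    simp
  · rw [lintegral_Ioi_ite_ge_rpow hp2 h0, ← ofReal_norm,
      ENNReal.ofReal_rpow_of_pos h0,
      ← ENNReal.ofReal_mul (div_nonneg (by positivity) (by linarith)),
      ← ENNReal.ofReal_mul (inv_nonneg.2 (by linarith))]
    congr 1
    rw [Real.rpow_sub h0]
    field_simp

/-- Splitting at height `t` bounds the distribution function of `(1 + |ξ|²)^{d/2} ℱg`. -/
lemma paley_distribution_le {d : ℕ} (hd : 1 ≤ d) {g : E d → ℂ} (hgc : Continuous g)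
    (hg : Integrable g) (hg2 : MemLp g 2) {p t : ℝ} (ht : 0 < t) :
    paleyMeasure d {ξ | t < (1 + ‖ξ‖ ^ 2) ^ ((d : ℝ) / 2) * ‖FT d g ξ‖} *
        ENNReal.ofReal (t ^ (p - 1)) ≤
      (ENNReal.ofReal (2 ^ d) * ∫⁻ ξ : E d, ENNReal.ofReal (((1 + ‖ξ‖ ^ 2) ^ d)⁻¹)) *
          ENNReal.ofReal 2 *
          (∫⁻ x, (if t < ‖g x‖ then ENNReal.ofReal (t ^ (p - 2)) else 0) * ‖g x‖ₑ) +
        ENNReal.ofReal ((2 * π) ^ d) * ENNReal.ofReal 4 *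
          (∫⁻ x, (if ‖g x‖ ≤ t then ENNReal.ofReal (t ^ (p - 3)) else 0) * ‖g x‖ₑ ^ (2 : ℝ)) := by
  set S : Set (E d) := {x | t < ‖g x‖} with hS
  have hSm : MeasurableSet S := measurableSet_lt (by fun_prop) (by fun_prop)
  set u : E d → ℂ := S.indicator g with hu
  set v : E d → ℂ := Sᶜ.indicator g with hv
  have hu1 : Integrable u := hg.indicator hSm
  have hv1 : Integrable v := hg.indicator hSm.compl
  have hv2 : MemLp v 2 := hg2.indicator hSm.compl
  have huv : u + v = g := Set.indicator_self_add_compl S g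
  have hsub : {ξ | t < (1 + ‖ξ‖ ^ 2) ^ ((d : ℝ) / 2) * ‖FT d g ξ‖} ⊆
      {ξ | t / 2 < (1 + ‖ξ‖ ^ 2) ^ ((d : ℝ) / 2) * ‖FT d u ξ‖} ∪
      {ξ | t / 2 < (1 + ‖ξ‖ ^ 2) ^ ((d : ℝ) / 2) * ‖FT d v ξ‖} := by
    intro ξ (hξ : t < _)
    by_contra hcon
    simp only [Set.mem_union, Set.mem_ofPred_eq, not_or, not_lt] at hcon
    have h1 : ‖FT d g ξ‖ ≤ ‖FT d u ξ‖ + ‖FT d v ξ‖ := by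
      rw [← huv, FT_add d hu1 hv1]
      exact norm_add_le _ _
    have h2 := mul_le_mul_of_nonneg_left h1
      (by positivity : 0 ≤ (1 + ‖ξ‖ ^ 2) ^ ((d : ℝ) / 2))
    linarith [hcon.1, hcon.2]
  have ht2 : 0 < t / 2 := half_pos ht
  have e1 : ENNReal.ofReal (t / 2)⁻¹ * (∫⁻ x, ‖u x‖ₑ) * ENNReal.ofReal (t ^ (p - 1)) =
      ENNReal.ofReal 2 *
        ∫⁻ x, (if t < ‖g x‖ then ENNReal.ofReal (t ^ (p - 2)) else 0) * ‖g x‖ₑ := by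
    rw [mul_right_comm, ← ENNReal.ofReal_mul (by positivity),
      show (t / 2)⁻¹ * t ^ (p - 1) = 2 * t ^ (p - 2) by
        rw [show p - 1 = (p - 2) + 1 by ring, Real.rpow_add_one ht.ne']; field_simp,
      ENNReal.ofReal_mul (by norm_num), mul_assoc, ← lintegral_const_mul' _ _ ENNReal.ofReal_ne_top]
    congr 2
    ext x
    by_cases hx : t < ‖g x‖ <;> simp [hu, hS, hx]
  have e2 : ENNReal.ofReal ((t / 2) ^ (-2 : ℝ)) * (∫⁻ x, ‖v x‖ₑ ^ (2 : ℝ)) *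
      ENNReal.ofReal (t ^ (p - 1)) = ENNReal.ofReal 4 *
        ∫⁻ x, (if ‖g x‖ ≤ t then ENNReal.ofReal (t ^ (p - 3)) else 0) * ‖g x‖ₑ ^ (2 : ℝ) := by
    rw [mul_right_comm, ← ENNReal.ofReal_mul (by positivity),
      show (t / 2) ^ (-2 : ℝ) * t ^ (p - 1) = 4 * t ^ (p - 3) by
        rw [show p - 1 = (p - 3) + 2 by ring, Real.rpow_add ht, Real.rpow_neg (by positivity),
          Real.rpow_two, Real.rpow_two]
        field_simp
        norm_num,
      ENNReal.ofReal_mul (by norm_num), mul_assoc, ← lintegral_const_mul' _ _ ENNReal.ofReal_ne_top]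
    congr 2
    ext x
    by_cases hx : t < ‖g x‖
    · simp [hv, hS, hx, not_le.2 hx]
    · simp [hv, hS, hx, not_lt.1 hx]
  refine (mul_le_mul_left ((measure_mono hsub).trans ((measure_union_le _ _).trans
    (add_le_add (paley_weak_one_one hd hu1 ht2) (paley_weak_two_two d hv1 hv2 ht2))))
    (ENNReal.ofReal (t ^ (p - 1)))).trans (le_of_eq ?_)
  rw [add_mul, mul_assoc _ (_ * _) (ENNReal.ofReal (t ^ (p - 1))), e1,
    mul_assoc _ (_ * _) (ENNReal.ofReal (t ^ (p - 1))), e2]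
  ring

/-- Paley's inequality, with respect to the measure `(1 + |ξ|²)^{-d} dξ`. -/
lemma exists_paley_lintegral {d : ℕ} (hd : 1 ≤ d) {p : ℝ} (hp1 : 1 < p) (hp2 : p ≤ 2) :
    ∃ K : ℝ≥0∞, K ≠ ⊤ ∧ ∀ g : 𝓢(E d, ℂ),
      ∫⁻ ξ, ENNReal.ofReal (((1 + ‖ξ‖ ^ 2) ^ ((d : ℝ) / 2) * ‖FT d g ξ‖) ^ p) ∂(paleyMeasure d) ≤
        K * ∫⁻ x, ENNReal.ofReal (‖g x‖ ^ p) := by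
  rcases hp2.eq_or_lt with rfl | hp2
  · refine ⟨ENNReal.ofReal ((2 * π) ^ d), ENNReal.ofReal_ne_top, fun g ↦ le_of_eq ?_⟩
    have h := paley_strong_two_two d g.integrable (g.memLp 2)
    convert h using 4 with ξ ξ
    · rw [ENNReal.ofReal_rpow_of_nonneg (by positivity) (by norm_num)]
    · rw [← ofReal_norm, ENNReal.ofReal_rpow_of_nonneg (by positivity) (by norm_num)]
  · refine ⟨ENNReal.ofReal p *
      ((ENNReal.ofReal (2 ^ d) * ∫⁻ ξ : E d, ENNReal.ofReal (((1 + ‖ξ‖ ^ 2) ^ d)⁻¹)) *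
        ENNReal.ofReal 2 * ENNReal.ofReal (p - 1)⁻¹ +
        ENNReal.ofReal ((2 * π) ^ d) * ENNReal.ofReal 4 * ENNReal.ofReal (2 - p)⁻¹), ?_, fun g ↦ ?_⟩
    · have := lintegral_paleyDensity_ne_top hd
      finiteness
    · have hc := continuous_FT d g.integrable
      rw [lintegral_rpow_eq_lintegral_meas_lt_mul _ (Filter.Eventually.of_forall fun ξ ↦ by positivity)
        (by fun_prop) (by linarith), mul_assoc]
      gcongr
      refine (setLIntegral_mono' measurableSet_Ioi fun t ht ↦ paley_distribution_le hd g.continuous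
        g.integrable (g.memLp 2) ht).trans (le_of_eq ?_)
      have ma := (measurable_level_above g.continuous p).lintegral_prod_right' (ν := volume)
      have mb := (measurable_level_below g.continuous p).lintegral_prod_right' (ν := volume)
      rw [lintegral_add_left (ma.const_mul _), lintegral_const_mul _ ma, lintegral_const_mul _ mb,
        lintegral_level_above hp1 g.continuous, lintegral_level_below hp1 hp2 g.continuous]
      ring

lemma integral_gammaMeasure_exp_neg {a : ℝ} (ha : 0 < a) {r : ℝ} (hr : 0 ≤ r) :
    ∫ t, Real.exp (-(√(2 * t) ^ 2 * r / 2)) ∂(ProbabilityTheory.gammaMeasure a 1) =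
      (1 + r) ^ (-a) := by
  have hpdf : ∀ t, (ProbabilityTheory.gammaPDF a 1 t).toReal =
      ProbabilityTheory.gammaPDFReal a 1 t := fun t ↦
    ENNReal.toReal_ofReal (ProbabilityTheory.gammaPDFReal_nonneg ha one_pos t)
  have hmeas : Measurable (ProbabilityTheory.gammaPDF a 1) :=
    (ProbabilityTheory.measurable_gammaPDFReal a 1).ennreal_ofReal
  rw [ProbabilityTheory.gammaMeasure, integral_withDensity_eq_integral_toReal_smul hmeas
    (Filter.Eventually.of_forall fun t ↦ ENNReal.ofReal_lt_top)]
  have h1 : ∀ t, (ProbabilityTheory.gammaPDF a 1 t).toReal •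
      Real.exp (-(√(2 * t) ^ 2 * r / 2)) = (Set.Ici (0 : ℝ)).indicator
        (fun t ↦ (Real.Gamma a)⁻¹ * (t ^ (a - 1) * Real.exp (-((1 + r) * t)))) t := by
    intro t
    rw [hpdf, ProbabilityTheory.gammaPDFReal, Set.indicator_apply]
    simp only [Set.mem_Ici]
    split_ifs with ht
    · rw [Real.sq_sqrt (by positivity), smul_eq_mul, Real.one_rpow, one_div, mul_assoc, mul_assoc,
        ← Real.exp_add]
      congr 3
      ring_nf
    · simp
  simp only [h1]
  rw [integral_indicator measurableSet_Ici, integral_Ici_eq_integral_Ioi, integral_const_mul,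
    Real.integral_rpow_mul_exp_neg_mul_Ioi ha (by linarith), mul_comm, mul_assoc,
    mul_inv_cancel₀ (Real.Gamma_pos_of_pos ha).ne', mul_one, one_div, Real.inv_rpow (by linarith),
    Real.rpow_neg (by linarith)]

/-- The law whose density is the Bessel kernel: a Gamma mixture of centred Gaussian laws. -/
def besselLaw (d : ℕ) (a : ℝ) : Measure (E d) :=
  ((ProbabilityTheory.gammaMeasure a 1).prod (ProbabilityTheory.stdGaussian (E d))).map
    fun z ↦ √(2 * z.1) • z.2

lemma isProbabilityMeasure_besselLaw (d : ℕ) {a : ℝ} (ha : 0 < a) :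
    IsProbabilityMeasure (besselLaw d a) := by
  have := ProbabilityTheory.isProbabilityMeasure_gammaMeasure ha one_pos
  exact Measure.isProbabilityMeasure_map (by fun_prop)

lemma charFun_besselLaw (d : ℕ) {a : ℝ} (ha : 0 < a) (ξ : E d) :
    charFun (besselLaw d a) ξ = (((1 + ‖ξ‖ ^ 2) ^ (-a) : ℝ) : ℂ) := by
  have := ProbabilityTheory.isProbabilityMeasure_gammaMeasure ha one_pos
  rw [charFun_apply, besselLaw, integral_map (by fun_prop) (by fun_prop), integral_prod]
  · have h1 : ∀ t : ℝ, ∫ z, cexp (⟪√(2 * t) • z, ξ⟫ * Complex.I)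
        ∂(ProbabilityTheory.stdGaussian (E d)) =
        ((Real.exp (-(√(2 * t) ^ 2 * ‖ξ‖ ^ 2 / 2)) : ℝ) : ℂ) := by
      intro t
      have h2 := ProbabilityTheory.charFun_stdGaussian (√(2 * t) • ξ)
      rw [charFun_apply] at h2
      simp only [real_inner_smul_right] at h2
      simp only [real_inner_smul_left]
      rw [h2, norm_smul, Real.norm_of_nonneg (Real.sqrt_nonneg _)]
      push_cast
      ring_nf
    simp only [h1]
    rw [integral_complex_ofReal, integral_gammaMeasure_exp_neg ha (by positivity)]
  · refine Integrable.of_bound (C := 1) (by fun_prop) (Filter.Eventually.of_forall fun z ↦ ?_)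
    rw [Complex.norm_exp_ofReal_mul_I]

lemma schwartzBessel_eq_integral_besselLaw (d : ℕ) {k : ℝ} (hk : k < 0) (u : 𝓢(E d, ℂ)) (x : E d) :
    schwartzBessel d k u x = ∫ y, u (x + y) ∂(besselLaw d (-k / 2)) := by
  have ha : 0 < -k / 2 := by linarith
  have := isProbabilityMeasure_besselLaw d ha
  have h1 : ∀ y, u (x + y) = (((2 * π) ^ d : ℝ) : ℂ)⁻¹ *
      ∫ ξ, Complex.exp (Complex.I * (⟪x + y, ξ⟫ : ℂ)) * schwartzFT d u ξ := by
    intro y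
    rw [← schwartzInvFT_apply, schwartzInvFT_schwartzFT]
  simp only [h1]
  rw [schwartzBessel, schwartzInvFT_apply, integral_const_mul, integral_integral_swap]
  · congr 2
    ext ξ
    have h2 : ∀ y, Complex.exp (Complex.I * (⟪x + y, ξ⟫ : ℂ)) * schwartzFT d u ξ =
        (Complex.exp (Complex.I * (⟪x, ξ⟫ : ℂ)) * schwartzFT d u ξ) *
          Complex.exp ((⟪y, ξ⟫ : ℂ) * Complex.I) := by
      intro y
      rw [inner_add_left, Complex.ofReal_add, mul_add, Complex.exp_add]
      ring_nf
    simp only [h2]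
    rw [integral_const_mul, ← charFun_apply, charFun_besselLaw d ha, schwartzWeight_apply]
    ring_nf
  · have hi : Integrable (fun z : E d × E d ↦ schwartzFT d u z.2)
        ((besselLaw d (-k / 2)).prod volume) := (schwartzFT d u).integrable.comp_snd _
    refine hi.mono ?_ (Filter.Eventually.of_forall fun z ↦ ?_)
    · have := (schwartzFT d u).continuous
      exact Continuous.aestronglyMeasurable (by unfold Function.uncurry; fun_prop)
    · rw [Function.uncurry, norm_mul, mul_comm Complex.I, Complex.norm_exp_ofReal_mul_I, one_mul]

/-- Bessel potentials of nonpositive order are contractions of `Lᵖ`. -/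
lemma lintegral_schwartzBessel_le (d : ℕ) {k p : ℝ} (hk : k ≤ 0) (hp : 1 ≤ p) (u : 𝓢(E d, ℂ)) :
    ∫⁻ x, ‖schwartzBessel d k u x‖ₑ ^ p ≤ ∫⁻ x, ‖u x‖ₑ ^ p := by
  rcases hk.eq_or_lt with rfl | hk
  · rw [schwartzBessel, schwartzWeight_zero, schwartzInvFT_schwartzFT]
  have ha : 0 < -k / 2 := by linarith
  have := isProbabilityMeasure_besselLaw d ha
  have hp0 : 0 < p := by linarith
  have hc := u.continuous
  have h1 : ∀ x, ‖schwartzBessel d k u x‖ₑ ^ p ≤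
      ∫⁻ y, ‖u (x + y)‖ₑ ^ p ∂(besselLaw d (-k / 2)) := by
    intro x
    have h2 : ‖schwartzBessel d k u x‖ₑ ≤
        eLpNorm' (fun y ↦ u (x + y)) 1 (besselLaw d (-k / 2)) := by
      rw [schwartzBessel_eq_integral_besselLaw d hk, eLpNorm']
      simpa using enorm_integral_le_lintegral_enorm _
    have h3 := h2.trans (eLpNorm'_le_eLpNorm'_of_exponent_le one_pos hp _
      (Continuous.aestronglyMeasurable (by fun_prop)))
    rw [eLpNorm'] at h3
    have h4 := ENNReal.rpow_le_rpow h3 hp0.le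
    rwa [← ENNReal.rpow_mul, one_div_mul_cancel hp0.ne', ENNReal.rpow_one] at h4
  refine (lintegral_mono h1).trans ?_
  rw [lintegral_lintegral_swap]
  · have h2 : ∀ y, ∫⁻ x, ‖u (x + y)‖ₑ ^ p = ∫⁻ x, ‖u x‖ₑ ^ p := fun y ↦
      lintegral_add_right_eq_self (fun x ↦ ‖u x‖ₑ ^ p) y
    simp [h2]
  · have : Measurable u := hc.measurable
    unfold Function.uncurry
    fun_prop

lemma integrable_norm_rpow (d : ℕ) {p : ℝ} (hp : 1 ≤ p) (u : 𝓢(E d, ℂ)) :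
    Integrable fun x ↦ ‖u x‖ ^ p := by
  have h := (u.memLp (ENNReal.ofReal p) volume).integrable_norm_rpow
    (by simpa using by linarith) ENNReal.ofReal_ne_top
  rwa [ENNReal.toReal_ofReal (by linarith)] at h

lemma ofReal_integral_norm_rpow (d : ℕ) {p : ℝ} (hp : 1 ≤ p) (u : 𝓢(E d, ℂ)) :
    ENNReal.ofReal (∫ x, ‖u x‖ ^ p) = ∫⁻ x, ‖u x‖ₑ ^ p := by
  rw [ofReal_integral_eq_lintegral_ofReal (integrable_norm_rpow d hp u)
    (Filter.Eventually.of_forall fun x ↦ by positivity)]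
  refine lintegral_congr fun x ↦ ?_
  rw [← ofReal_norm, ENNReal.ofReal_rpow_of_nonneg (norm_nonneg _) (by linarith)]

/-- Sufficiency: Paley's inequality and the contractivity of negative Bessel potentials. -/
lemma exists_bessel_fourier_bound {d : ℕ} (hd : 1 ≤ d) {p : ℝ} (hp1 : 1 < p) (hp2 : p ≤ 2)
    {k₁ k₂ : ℝ} (hk₁ : 2 * d * (1 / p - 1 / 2) ≤ k₁) (hk₂ : k₂ ≤ 0) :
    ∃ C > (0 : ℝ), ∀ f : 𝓢(E d, ℂ),
      (∫ x, ‖schwartzBessel d k₂ (schwartzFT d f) x‖ ^ p) ^ (1 / p) ≤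
        C * (∫ x, ‖schwartzBessel d k₁ f x‖ ^ p) ^ (1 / p) := by
  obtain ⟨K, hK, hpaley⟩ := exists_paley_lintegral hd hp1 hp2
  have hp0 : 0 < p := by linarith
  refine ⟨(K.toReal + 1) ^ (1 / p), by positivity, fun f ↦ ?_⟩
  rw [← Real.mul_rpow (by positivity) (integral_nonneg fun x ↦ by positivity)]
  refine Real.rpow_le_rpow (integral_nonneg fun x ↦ by positivity) ?_ (by positivity)
  have hI : 0 ≤ ∫ x, ‖schwartzBessel d k₁ f x‖ ^ p := integral_nonneg fun x ↦ by positivity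
  rw [← ENNReal.ofReal_le_ofReal_iff (by positivity), ENNReal.ofReal_mul (by positivity),
    ofReal_integral_norm_rpow d hp1.le, ofReal_integral_norm_rpow d hp1.le]
  refine (lintegral_schwartzBessel_le d hk₂ hp1.le _).trans ?_
  have h := hpaley (schwartzBessel d k₁ f)
  rw [paleyMeasure, lintegral_withDensity_eq_lintegral_mul _ (measurable_paleyDensity d)
    (by rw [← coe_schwartzFT]; have := (schwartzFT d (schwartzBessel d k₁ f)).continuous.measurable
        fun_prop)] at h
  have h1 : ∀ x, ENNReal.ofReal (‖schwartzBessel d k₁ f x‖ ^ p) =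
      ‖schwartzBessel d k₁ f x‖ₑ ^ p := fun x ↦ by
    rw [← ofReal_norm, ENNReal.ofReal_rpow_of_nonneg (norm_nonneg _) hp0.le]
  simp only [h1] at h
  calc ∫⁻ x, ‖schwartzFT d f x‖ₑ ^ p
    _ ≤ _ := lintegral_mono fun ξ ↦ ?_
    _ ≤ _ := h
    _ ≤ _ := by
      gcongr
      rw [ENNReal.ofReal_add ENNReal.toReal_nonneg zero_le_one, ENNReal.ofReal_toReal hK]
      exact le_self_add
  rw [Pi.mul_apply, ← ENNReal.ofReal_mul (by positivity), ← ofReal_norm,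
    ENNReal.ofReal_rpow_of_nonneg (norm_nonneg _) hp0.le, ← schwartzFT_apply,
    schwartzFT_schwartzBessel, schwartzWeight_apply, norm_mul, Complex.norm_real,
    Real.norm_of_nonneg (by positivity)]
  refine ENNReal.ofReal_le_ofReal ?_
  have hw : 0 < 1 + ‖ξ‖ ^ 2 := by positivity
  rw [Real.mul_rpow (by positivity) (by positivity), Real.mul_rpow (by positivity) (by positivity),
    ← Real.rpow_mul hw.le, ← Real.rpow_mul hw.le, ← Real.rpow_natCast, ← Real.rpow_neg hw.le,
    ← mul_assoc, ← mul_assoc, ← Real.rpow_add hw, ← Real.rpow_add hw]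
  refine le_mul_of_one_le_left (by positivity) (Real.one_le_rpow (by nlinarith [sq_nonneg ‖ξ‖]) ?_)
  have := mul_le_mul_of_nonneg_right hk₁ hp0.le
  have h2 : 2 * d * (1 / p - 1 / 2) * p = 2 * d - d * p := by field_simp
  linarith

/-- The duality pairing controlled by the boundedness of the Fourier transform. -/
lemma norm_integral_schwartzWeight_mul_le (d : ℕ) {p q : ℝ} (hpq : p.HolderConjugate q)
    {k₁ k₂ C : ℝ} (hC : ∀ f : 𝓢(E d, ℂ),
      (∫ x, ‖schwartzBessel d k₂ (schwartzFT d f) x‖ ^ p) ^ (1 / p) ≤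
        C * (∫ x, ‖schwartzBessel d k₁ f x‖ ^ p) ^ (1 / p)) (f g : 𝓢(E d, ℂ)) :
    ‖∫ x, schwartzWeight d k₂ f x * schwartzFT d g x‖ ≤
      C * (∫ x, ‖schwartzBessel d k₁ f x‖ ^ p) ^ (1 / p) * (∫ x, ‖g x‖ ^ q) ^ (1 / q) := by
  rw [← integral_schwartzFT_mul, ← schwartzBessel_schwartzFT]
  refine (norm_integral_le_integral_norm _).trans ?_
  simp only [norm_mul]
  refine (integral_mul_norm_le_Lp_mul_Lq hpq
    (SchwartzMap.memLp _ _ volume) (SchwartzMap.memLp _ _ volume)).trans ?_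
  exact mul_le_mul_of_nonneg_right (hC f)
    (Real.rpow_nonneg (integral_nonneg fun x ↦ by positivity) _)

/-- The standard smooth bump supported in the unit ball around `c`. -/
def unitBump (d : ℕ) (c : E d) : ContDiffBump c := ⟨1 / 2, 1, by norm_num, by norm_num⟩

lemma unitBump_eq_comp_sub (d : ℕ) (c x : E d) : unitBump d c x = unitBump d 0 (x - c) := by
  simp [ContDiffBump.apply, unitBump]

lemma unitBump_eq_zero (d : ℕ) {c x : E d} (h : 1 ≤ ‖x - c‖) : unitBump d c x = 0 :=
  (unitBump d c).zero_of_le_dist (by rwa [dist_eq_norm])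

lemma unitBump_pos (d : ℕ) {c x : E d} (h : ‖x - c‖ < 1) : 0 < unitBump d c x :=
  (unitBump d c).pos_of_mem_ball (by rwa [mem_ball_iff_norm])

/-- The bump function `unitBump` as a complex Schwartz function. -/
def schwartzBump (d : ℕ) (c : E d) : 𝓢(E d, ℂ) :=
  HasCompactSupport.toSchwartzMap (f := fun x ↦ ((unitBump d c x : ℝ) : ℂ))
    ((unitBump d c).hasCompactSupport.comp_left (g := fun t : ℝ ↦ (t : ℂ)) Complex.ofReal_zero)
    (Complex.ofRealCLM.contDiff.comp (unitBump d c).contDiff)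

lemma schwartzBump_apply (d : ℕ) (c x : E d) :
    schwartzBump d c x = ((unitBump d c x : ℝ) : ℂ) := rfl

lemma schwartzBump_eq_comp_sub (d : ℕ) (c x : E d) :
    schwartzBump d c x = schwartzBump d 0 (x - c) := by
  rw [schwartzBump_apply, unitBump_eq_comp_sub, schwartzBump_apply]

lemma FT_of_eq_comp_sub (d : ℕ) (c : E d) {f g : 𝓢(E d, ℂ)} (h : ∀ x, f x = g (x - c))
    (ξ : E d) :
    FT d f ξ = Complex.exp (-Complex.I * (⟪c, ξ⟫ : ℂ)) * FT d g ξ := by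
  rw [FT, FT, ← integral_const_mul, ← integral_add_right_eq_self _ c]
  congr 1
  ext x
  rw [h, add_sub_cancel_right, inner_add_left, Complex.ofReal_add, mul_add, Complex.exp_add]
  ring

lemma norm_schwartzInvFT_of_eq_comp_sub (d : ℕ) (c : E d) {f g : 𝓢(E d, ℂ)} (h : ∀ x, f x = g (x - c))
    (x : E d) :
    ‖schwartzInvFT d f x‖ = ‖schwartzInvFT d g x‖ := by
  rw [schwartzInvFT_eq_FT_neg, schwartzInvFT_eq_FT_neg, FT_of_eq_comp_sub d c h]
  simp only [norm_mul]
  rw [neg_mul, ← mul_neg, mul_comm Complex.I, ← Complex.ofReal_neg,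
    Complex.norm_exp_ofReal_mul_I, one_mul]

lemma schwartzBessel_of_eq_comp_sub (d : ℕ) (c : E d) {f g : 𝓢(E d, ℂ)} (h : ∀ x, f x = g (x - c))
    (k : ℝ) (x : E d) :
    schwartzBessel d k f x = schwartzBessel d k g (x - c) := by
  rw [schwartzBessel, schwartzBessel, schwartzInvFT_apply, schwartzInvFT_apply]
  congr 2
  ext ξ
  rw [schwartzWeight_apply, schwartzWeight_apply, schwartzFT_apply, schwartzFT_apply,
    FT_of_eq_comp_sub d c h, inner_sub_left, Complex.ofReal_sub, mul_sub, sub_eq_add_neg,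
    Complex.exp_add]
  ring_nf

lemma integral_unitBump_sq_pos (d : ℕ) (c : E d) : 0 < ∫ x, unitBump d c x ^ 2 := by
  have hc := (unitBump d c).continuous
  refine Continuous.integral_pos_of_hasCompactSupport_nonneg_nonzero (x := c) (by fun_prop)
    ((unitBump d c).hasCompactSupport.comp_left (g := fun t : ℝ ↦ t ^ 2) (by simp))
    (fun x ↦ sq_nonneg _) (pow_pos (unitBump_pos d (by simp)) 2).ne'

/-- Necessity of `k₂ ≤ 0`: test with a bump translated to infinity. -/
lemma nonpos_of_bessel_fourier_bound {d : ℕ} (hd : 1 ≤ d) {p : ℝ} (hp1 : 1 < p) {k₁ k₂ C : ℝ}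
    (hC : ∀ f : 𝓢(E d, ℂ),
      (∫ x, ‖schwartzBessel d k₂ (schwartzFT d f) x‖ ^ p) ^ (1 / p) ≤
        C * (∫ x, ‖schwartzBessel d k₁ f x‖ ^ p) ^ (1 / p)) : k₂ ≤ 0 := by
  by_contra! hk
  have hpq := Real.HolderConjugate.conjExponent hp1
  set q := p.conjExponent
  set M := C * (∫ x, ‖schwartzBessel d k₁ (schwartzBump d 0) x‖ ^ p) ^ (1 / p) *
    (∫ x, ‖schwartzInvFT d (schwartzBump d 0) x‖ ^ q) ^ (1 / q)
  have hcont := (unitBump d 0).continuous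
  have key : ∀ t : ℝ, 0 ≤ t → t ^ k₂ * ∫ x, unitBump d 0 x ^ 2 ≤ M := by
    intro t ht
    let c : E d := EuclideanSpace.single ⟨0, hd⟩ (t + 1)
    have hcn : ‖c‖ = t + 1 := by simp [c, abs_of_nonneg (by linarith : 0 ≤ t + 1)]
    have h := norm_integral_schwartzWeight_mul_le d hpq hC (schwartzBump d c)
      (schwartzInvFT d (schwartzBump d c))
    simp only [schwartzBessel_of_eq_comp_sub d c (schwartzBump_eq_comp_sub d c),
      norm_schwartzInvFT_of_eq_comp_sub d c (schwartzBump_eq_comp_sub d c)] at h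
    rw [integral_sub_right_eq_self (fun x ↦ ‖schwartzBessel d k₁ (schwartzBump d 0) x‖ ^ p) c,
      schwartzFT_schwartzInvFT] at h
    refine le_trans ?_ h
    have h1 : ∀ x, schwartzWeight d k₂ (schwartzBump d c) x * schwartzBump d c x =
        (((1 + ‖x‖ ^ 2) ^ (k₂ / 2) * unitBump d c x ^ 2 : ℝ) : ℂ) := by
      intro x
      rw [schwartzWeight_apply, schwartzBump_apply]
      push_cast
      ring
    simp only [h1]
    rw [integral_complex_ofReal, Complex.norm_real]
    refine le_trans ?_ (le_abs_self _)
    have h2 : ∫ x, unitBump d 0 x ^ 2 = ∫ x, unitBump d c x ^ 2 := by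
      simp only [unitBump_eq_comp_sub d c]
      rw [integral_sub_right_eq_self (fun x ↦ unitBump d 0 x ^ 2) c]
    have hcc := (unitBump d c).continuous
    have hsupp : HasCompactSupport fun x ↦ unitBump d c x ^ 2 :=
      (unitBump d c).hasCompactSupport.comp_left (g := fun t : ℝ ↦ t ^ 2) (by simp)
    rw [h2, ← integral_const_mul]
    refine integral_mono (Continuous.integrable_of_hasCompactSupport (by fun_prop) hsupp.mul_left)
      (Continuous.integrable_of_hasCompactSupport ?_ hsupp.mul_left) fun x ↦ ?_
    · have : 0 ≤ k₂ / 2 := by positivity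
      fun_prop (disch := assumption)
    · rcases le_or_gt 1 ‖x - c‖ with hx | hx
      · simp [unitBump_eq_zero d hx]
      · have hx' : t ≤ ‖x‖ := by
          have := norm_sub_norm_le c x
          rw [norm_sub_rev] at this
          linarith
        dsimp only
        gcongr
        calc t ^ k₂ = (t ^ 2) ^ (k₂ / 2) := by
              rw [← Real.rpow_natCast, ← Real.rpow_mul ht]
              congr 1
              push_cast
              ring
          _ ≤ _ := by
              gcongr
              nlinarith
  have hlim := (tendsto_rpow_atTop hk).atTop_mul_const (integral_unitBump_sq_pos d 0)
  obtain ⟨t, ht, ht0⟩ := ((hlim.eventually_gt_atTop M).and (Filter.eventually_ge_atTop 0)).exists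
  exact (key t ht0).not_gt ht

lemma integral_eq_pow_mul_integral_comp_smul (d : ℕ) {ε : ℝ} (hε : 0 < ε) (G : E d → ℂ) :
    ∫ x, G x = ((ε ^ d : ℝ) : ℂ) * ∫ x, G (ε • x) := by
  have h := Measure.integral_comp_smul (volume : Measure (E d)) G ε
  rw [finrank_euclideanSpace_fin, abs_of_pos (by positivity), Complex.real_smul] at h
  rw [h, ← mul_assoc, ← Complex.ofReal_mul, mul_inv_cancel₀ (by positivity), Complex.ofReal_one,
    one_mul]

/-- The Schwartz function `x ↦ f (ε x)`. -/
def schwartzDilate (d : ℕ) {ε : ℝ} (hε : 0 < ε) (f : 𝓢(E d, ℂ)) : 𝓢(E d, ℂ) :=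
  SchwartzMap.compCLMOfContinuousLinearEquiv ℂ (dilation d ε hε.ne') f

lemma schwartzDilate_apply (d : ℕ) {ε : ℝ} (hε : 0 < ε) (f : 𝓢(E d, ℂ)) (x : E d) :
    schwartzDilate d hε f x = f (ε • x) := rfl

lemma FT_schwartzDilate (d : ℕ) {ε : ℝ} (hε : 0 < ε) (f : 𝓢(E d, ℂ)) (ξ : E d) :
    FT d (schwartzDilate d hε f) ξ = (((ε ^ d)⁻¹ : ℝ) : ℂ) * FT d f (ε⁻¹ • ξ) := by
  rw [FT, integral_eq_pow_mul_integral_comp_smul d (inv_pos.mpr hε), inv_pow, FT]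
  congr 2
  ext x
  rw [schwartzDilate_apply, smul_inv_smul₀ hε.ne', real_inner_smul_left, real_inner_smul_right]

lemma schwartzInvFT_schwartzDilate (d : ℕ) {ε : ℝ} (hε : 0 < ε) (f : 𝓢(E d, ℂ)) (x : E d) :
    schwartzInvFT d (schwartzDilate d hε f) x =
      (((ε ^ d)⁻¹ : ℝ) : ℂ) * schwartzInvFT d f (ε⁻¹ • x) := by
  rw [schwartzInvFT_eq_FT_neg, schwartzInvFT_eq_FT_neg, FT_schwartzDilate, smul_neg]
  ring

lemma Lp_norm_comp_smul (d : ℕ) {ε r : ℝ} (hε : 0 < ε) (G : E d → ℂ) :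
    (∫ x, ‖G (ε • x)‖ ^ r) ^ (1 / r) = ε ^ (-(d / r)) * (∫ x, ‖G x‖ ^ r) ^ (1 / r) := by
  rw [Measure.integral_comp_smul volume (fun x ↦ ‖G x‖ ^ r), finrank_euclideanSpace_fin,
    abs_of_pos (by positivity), smul_eq_mul,
    Real.mul_rpow (by positivity) (integral_nonneg fun x ↦ by positivity), ← Real.rpow_natCast,
    ← Real.rpow_neg hε.le, ← Real.rpow_mul hε.le]
  congr 2
  ring

/-- The integrand of the duality pairing after rescaling frequencies to unit size. -/
def pairingIntegrand (d : ℕ) (k₁ k₂ : ℝ) (f : 𝓢(E d, ℂ)) (ε : ℝ) (z : E d × E d) : ℂ :=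
  (((1 + ‖ε • z.1‖ ^ 2) ^ (k₂ / 2) : ℝ) : ℂ) * schwartzFT d f z.1 *
    (Complex.exp (Complex.I * (⟪z.1, z.2⟫ : ℂ)) *
      ((((ε ^ 2 + ‖z.2‖ ^ 2) ^ (-k₁ / 2) : ℝ) : ℂ) * f z.2))

lemma aestronglyMeasurable_pairingIntegrand (d : ℕ) (k₁ k₂ : ℝ) (f : 𝓢(E d, ℂ)) (ε : ℝ) :
    AEStronglyMeasurable (pairingIntegrand d k₁ k₂ f ε) := by
  have h1 := f.continuous.measurable
  have h2 := (schwartzFT d f).continuous.measurable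
  have h3 : Measurable fun z : E d × E d ↦ (⟪z.1, z.2⟫ : ℝ) :=
    (continuous_fst.inner continuous_snd).measurable
  refine Measurable.aestronglyMeasurable ?_
  unfold pairingIntegrand
  fun_prop

lemma rpow_le_ten_rpow_abs {x : ℝ} (h1 : 1 ≤ x) (h2 : x ≤ 10) (a : ℝ) : x ^ a ≤ 10 ^ |a| :=
  (Real.rpow_le_rpow_of_exponent_le h1 (le_abs_self a)).trans
    (Real.rpow_le_rpow (by linarith) h2 (abs_nonneg a))

lemma one_le_norm_of_norm_sub_lt {d : ℕ} {c x : E d} (hc : ‖c‖ = 2) (hx : ‖x - c‖ < 1) :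
    1 ≤ ‖x‖ ∧ ‖x‖ ≤ 3 := by
  have h1 := norm_sub_norm_le c x
  have h2 := norm_sub_norm_le x c
  rw [norm_sub_rev] at h1
  constructor <;> linarith

lemma weight_mul_norm_schwartzBump_le {d : ℕ} {c : E d} (hc : ‖c‖ = 2) {ε : ℝ} (h0 : 0 ≤ ε)
    (h1 : ε ≤ 1) (a : ℝ) (x : E d) :
    (ε ^ 2 + ‖x‖ ^ 2) ^ a * ‖schwartzBump d c x‖ ≤ 10 ^ |a| * ‖schwartzBump d c x‖ := by
  rcases le_or_gt 1 ‖x - c‖ with hx | hx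
  · simp [schwartzBump_apply, unitBump_eq_zero d hx]
  · obtain ⟨h2, h3⟩ := one_le_norm_of_norm_sub_lt hc hx
    gcongr
    exact rpow_le_ten_rpow_abs (by nlinarith) (by nlinarith) a

lemma norm_pairingIntegrand_le {d : ℕ} {c : E d} (hc : ‖c‖ = 2) (k₁ : ℝ) {k₂ : ℝ} (hk₂ : k₂ ≤ 0)
    {ε : ℝ} (h0 : 0 ≤ ε) (h1 : ε ≤ 1) (z : E d × E d) :
    ‖pairingIntegrand d k₁ k₂ (schwartzBump d c) ε z‖ ≤
      ‖schwartzFT d (schwartzBump d c) z.1‖ * (10 ^ |-k₁ / 2| * ‖schwartzBump d c z.2‖) := by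
  rw [pairingIntegrand]
  simp only [norm_mul]
  rw [mul_comm Complex.I, Complex.norm_exp_ofReal_mul_I, one_mul, Complex.norm_real,
    Complex.norm_real, Real.norm_of_nonneg (by positivity), Real.norm_of_nonneg (by positivity)]
  gcongr ?_ * ?_
  · refine mul_le_of_le_one_left (norm_nonneg _) (Real.rpow_le_one_of_one_le_of_nonpos ?_ ?_)
    · nlinarith [sq_nonneg ‖ε • z.1‖]
    · linarith
  · exact weight_mul_norm_schwartzBump_le hc h0 h1 _ _

lemma integrable_pairingBound (d : ℕ) (c : E d) (k₁ : ℝ) :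
    Integrable fun z : E d × E d ↦
      ‖schwartzFT d (schwartzBump d c) z.1‖ * (10 ^ |-k₁ / 2| * ‖schwartzBump d c z.2‖) :=
  (SchwartzMap.integrable (μ := volume) _).norm.mul_prod
    ((SchwartzMap.integrable (μ := volume) _).norm.const_mul _)

lemma integrable_pairingIntegrand {d : ℕ} {c : E d} (hc : ‖c‖ = 2) (k₁ : ℝ) {k₂ : ℝ}
    (hk₂ : k₂ ≤ 0) {ε : ℝ} (h0 : 0 ≤ ε) (h1 : ε ≤ 1) :
    Integrable (pairingIntegrand d k₁ k₂ (schwartzBump d c) ε) :=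
  (integrable_pairingBound d c k₁).mono' (aestronglyMeasurable_pairingIntegrand d k₁ k₂ _ ε)
    (Filter.Eventually.of_forall (norm_pairingIntegrand_le hc k₁ hk₂ h0 h1))

lemma continuousAt_pairingIntegrand_zero {d : ℕ} {c : E d} (hc : ‖c‖ = 2) (k₁ k₂ : ℝ)
    (z : E d × E d) :
    ContinuousAt (fun ε ↦ pairingIntegrand d k₁ k₂ (schwartzBump d c) ε z) 0 := by
  unfold pairingIntegrand
  refine ContinuousAt.mul (ContinuousAt.mul ?_ continuousAt_const)
    (continuousAt_const.mul ?_)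
  · refine Complex.continuous_ofReal.continuousAt.comp (ContinuousAt.rpow_const ?_ (Or.inl ?_))
    · exact Continuous.continuousAt (by fun_prop)
    · positivity
  · rcases le_or_gt 1 ‖z.2 - c‖ with hx | hx
    · simp [schwartzBump_apply, unitBump_eq_zero d hx, continuousAt_const]
    · have h2 := (one_le_norm_of_norm_sub_lt hc hx).1
      refine (Complex.continuous_ofReal.continuousAt.comp
        (ContinuousAt.rpow_const ?_ (Or.inl ?_))).mul continuousAt_const
      · exact Continuous.continuousAt (by fun_prop)
      · positivity

lemma tendsto_integral_pairingIntegrand {d : ℕ} {c : E d} (hc : ‖c‖ = 2) (k₁ : ℝ) {k₂ : ℝ}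
    (hk₂ : k₂ ≤ 0) :
    Filter.Tendsto (fun ε ↦ ∫ z, pairingIntegrand d k₁ k₂ (schwartzBump d c) ε z)
      (nhdsWithin 0 (Set.Ioi 0)) (nhds (∫ z, pairingIntegrand d k₁ k₂ (schwartzBump d c) 0 z)) := by
  refine tendsto_integral_filter_of_dominated_convergence _
    (Filter.Eventually.of_forall fun ε ↦ aestronglyMeasurable_pairingIntegrand d k₁ k₂ _ ε) ?_
    (integrable_pairingBound d c k₁) (Filter.Eventually.of_forall fun z ↦
      (continuousAt_pairingIntegrand_zero hc k₁ k₂ z).tendsto.mono_left nhdsWithin_le_nhds)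
  filter_upwards [Ioc_mem_nhdsGT zero_lt_one] with ε hε
  exact Filter.Eventually.of_forall (norm_pairingIntegrand_le hc k₁ hk₂ hε.1.le hε.2)

lemma integral_pairingIntegrand_zero_ne_zero {d : ℕ} {c : E d} (hc : ‖c‖ = 2) (k₁ : ℝ) {k₂ : ℝ}
    (hk₂ : k₂ ≤ 0) : ∫ z, pairingIntegrand d k₁ k₂ (schwartzBump d c) 0 z ≠ 0 := by
  have h0 : (((2 * π) ^ d : ℝ) : ℂ) ≠ 0 := by
    exact_mod_cast (by positivity : ((2 * π) ^ d : ℝ) ≠ 0)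
  have hi := integrable_pairingIntegrand hc k₁ hk₂ le_rfl zero_le_one
  rw [Measure.volume_eq_prod] at hi ⊢
  rw [integral_prod_symm _ hi]
  have h1 : ∀ y, ∫ x, pairingIntegrand d k₁ k₂ (schwartzBump d c) 0 (x, y) =
      (((2 * π) ^ d : ℝ) : ℂ) *
        (((‖y‖ ^ 2) ^ (-k₁ / 2) * unitBump d c y ^ 2 : ℝ) : ℂ) := by
    intro y
    have h2 := schwartzInvFT_apply d (schwartzFT d (schwartzBump d c)) y
    rw [schwartzInvFT_schwartzFT, eq_inv_mul_iff_mul_eq₀ h0] at h2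
    have h3 : ∀ x, pairingIntegrand d k₁ k₂ (schwartzBump d c) 0 (x, y) =
        (((‖y‖ ^ 2) ^ (-k₁ / 2) : ℝ) : ℂ) * schwartzBump d c y *
          (Complex.exp (Complex.I * (⟪y, x⟫ : ℂ)) * schwartzFT d (schwartzBump d c) x) := by
      intro x
      rw [pairingIntegrand, real_inner_comm x y]
      simp
      ring
    simp only [h3]
    rw [integral_const_mul, ← h2, schwartzBump_apply]
    push_cast
    ring
  simp only [h1]
  rw [integral_const_mul, integral_complex_ofReal]
  refine mul_ne_zero h0 (Complex.ofReal_ne_zero.mpr (ne_of_gt ?_))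
  have hnn : ∀ y, 0 ≤ (‖y‖ ^ 2) ^ (-k₁ / 2) * unitBump d c y ^ 2 := fun y ↦ by positivity
  rw [integral_pos_iff_support_of_nonneg hnn]
  · refine (Metric.measure_ball_pos volume c one_pos).trans_le (measure_mono fun y hy ↦ ?_)
    rw [mem_ball_iff_norm] at hy
    have := one_le_norm_of_norm_sub_lt hc hy
    have := unitBump_pos d hy
    have : 0 < ‖y‖ := by linarith
    rw [Function.mem_support]
    positivity
  · have := (unitBump d c).continuous.measurable
    refine ((schwartzBump d c).integrable.norm.const_mul (10 ^ |-k₁ / 2|)).mono'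
      (Measurable.aestronglyMeasurable (by fun_prop)) (Filter.Eventually.of_forall fun y ↦ ?_)
    rw [Real.norm_of_nonneg (hnn y)]
    refine le_trans ?_ (weight_mul_norm_schwartzBump_le hc le_rfl zero_le_one _ y)
    have h2 := (unitBump d c).nonneg (x := y)
    rw [schwartzBump_apply, Complex.norm_real, Real.norm_of_nonneg h2, zero_pow two_ne_zero,
      zero_add]
    gcongr
    nlinarith [(unitBump d c).le_one (x := y)]

lemma integral_schwartzWeight_mul_schwartzDilate {d : ℕ} {c : E d} (hc : ‖c‖ = 2) (k₁ : ℝ) {k₂ : ℝ}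
    (hk₂ : k₂ ≤ 0) {ε : ℝ} (h0 : 0 < ε) (h1 : ε ≤ 1) :
    ∫ x, schwartzWeight d k₂ (schwartzBessel d (-k₁)
        (schwartzInvFT d (schwartzDilate d h0 (schwartzBump d c)))) x *
      schwartzFT d (schwartzDilate d h0 (schwartzBump d c)) x =
      (((2 * π) ^ d)⁻¹ * ε ^ (k₁ - d) : ℝ) *
        ∫ z, pairingIntegrand d k₁ k₂ (schwartzBump d c) ε z := by
  have hi := integrable_pairingIntegrand hc k₁ hk₂ h0.le h1
  rw [Measure.volume_eq_prod] at hi ⊢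
  rw [integral_prod _ hi, integral_eq_pow_mul_integral_comp_smul d h0, ← integral_const_mul,
    ← integral_const_mul]
  congr 1
  ext y
  simp only [pairingIntegrand]
  rw [schwartzWeight_apply, schwartzFT_apply, FT_schwartzDilate, inv_smul_smul₀ h0.ne',
    schwartzBessel, schwartzFT_schwartzInvFT, schwartzInvFT_apply,
    integral_eq_pow_mul_integral_comp_smul d (inv_pos.mpr h0), integral_const_mul]
  have h2 : ∀ x, Complex.exp (Complex.I * (⟪ε • y, ε⁻¹ • x⟫ : ℂ)) *
      schwartzWeight d (-k₁) (schwartzDilate d h0 (schwartzBump d c)) (ε⁻¹ • x) =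
      ((ε ^ k₁ : ℝ) : ℂ) * (Complex.exp (Complex.I * (⟪y, x⟫ : ℂ)) *
        ((((ε ^ 2 + ‖x‖ ^ 2) ^ (-k₁ / 2) : ℝ) : ℂ) * schwartzBump d c x)) := by
    intro x
    have h3 : (1 + ‖ε⁻¹ • x‖ ^ 2) ^ (-k₁ / 2) = ε ^ k₁ * (ε ^ 2 + ‖x‖ ^ 2) ^ (-k₁ / 2) := by
      have h4 : 1 + ‖ε⁻¹ • x‖ ^ 2 = ε ^ (-2 : ℝ) * (ε ^ 2 + ‖x‖ ^ 2) := by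
        rw [norm_smul, Real.norm_of_nonneg (by positivity), Real.rpow_neg h0.le]
        norm_cast
        field_simp
      rw [h4, Real.mul_rpow (by positivity) (by positivity), ← Real.rpow_mul h0.le]
      congr 2
      ring
    rw [schwartzWeight_apply, schwartzDilate_apply, smul_inv_smul₀ h0.ne', h3,
      real_inner_smul_left, real_inner_smul_right, mul_inv_cancel_left₀ h0.ne', Complex.ofReal_mul]
    ring
  simp only [h2]
  rw [integral_const_mul, ← schwartzFT_apply, Real.rpow_sub h0, Real.rpow_natCast, inv_pow]
  have h5 : (ε : ℂ) ≠ 0 := Complex.ofReal_ne_zero.mpr h0.ne'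
  push_cast
  field_simp

/-- Necessity of the condition on `k₁`: test with functions of low frequency. -/
lemma le_of_bessel_fourier_bound {d : ℕ} (hd : 1 ≤ d) {p : ℝ} (hp1 : 1 < p) {k₁ k₂ C : ℝ}
    (hk₂ : k₂ ≤ 0)
    (hC : ∀ f : 𝓢(E d, ℂ),
      (∫ x, ‖schwartzBessel d k₂ (schwartzFT d f) x‖ ^ p) ^ (1 / p) ≤
        C * (∫ x, ‖schwartzBessel d k₁ f x‖ ^ p) ^ (1 / p)) :
    2 * d * (1 / p - 1 / 2) ≤ k₁ := by
  by_contra! hk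
  have hpq := Real.HolderConjugate.conjExponent hp1
  set q := p.conjExponent
  let c : E d := EuclideanSpace.single ⟨0, hd⟩ 2
  have hc : ‖c‖ = 2 := by simp [c]
  set s := 2 * d * (1 / p - 1 / 2) - k₁ with hs
  set M := (2 * π) ^ d * (C * (∫ x, ‖schwartzInvFT d (schwartzBump d c) x‖ ^ p) ^ (1 / p) *
    (∫ x, ‖schwartzBump d c x‖ ^ q) ^ (1 / q))
  have key : ∀ ε ∈ Set.Ioc (0 : ℝ) 1,
      ‖∫ z, pairingIntegrand d k₁ k₂ (schwartzBump d c) ε z‖ ≤ M * ε ^ s := by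
    rintro ε ⟨h0, h1⟩
    have h := norm_integral_schwartzWeight_mul_le d hpq hC
      (schwartzBessel d (-k₁) (schwartzInvFT d (schwartzDilate d h0 (schwartzBump d c))))
      (schwartzDilate d h0 (schwartzBump d c))
    rw [integral_schwartzWeight_mul_schwartzDilate hc k₁ hk₂ h0 h1,
      schwartzBessel_neg_schwartzBessel] at h
    simp only [schwartzDilate_apply] at h
    have h2 : (∫ x, ‖schwartzInvFT d (schwartzDilate d h0 (schwartzBump d c)) x‖ ^ p) ^ (1 / p) =
        ε ^ (-(d : ℝ)) * (ε ^ (d / p) *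
          (∫ x, ‖schwartzInvFT d (schwartzBump d c) x‖ ^ p) ^ (1 / p)) := by
      have h3 := Lp_norm_comp_smul d (r := p) (inv_pos.mpr h0)
        (schwartzInvFT d (schwartzBump d c))
      rw [Real.inv_rpow h0.le, ← Real.rpow_neg h0.le, neg_neg] at h3
      rw [← h3]
      simp only [schwartzInvFT_schwartzDilate, norm_mul, Complex.norm_real]
      rw [Real.norm_of_nonneg (by positivity)]
      have h4 : ∀ x, ((ε ^ d)⁻¹ * ‖schwartzInvFT d (schwartzBump d c) (ε⁻¹ • x)‖) ^ p =
          ((ε ^ d)⁻¹) ^ p * ‖schwartzInvFT d (schwartzBump d c) (ε⁻¹ • x)‖ ^ p := fun x ↦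
        Real.mul_rpow (by positivity) (norm_nonneg _)
      simp only [h4]
      rw [integral_const_mul, Real.mul_rpow (by positivity)
        (integral_nonneg fun x ↦ by positivity), ← Real.rpow_mul (by positivity),
        mul_one_div_cancel (by linarith), Real.rpow_one, Real.rpow_neg h0.le, Real.rpow_natCast]
    rw [h2, Lp_norm_comp_smul d h0, norm_mul, Complex.norm_real,
      Real.norm_of_nonneg (by positivity)] at h
    have h5 : ε ^ s * ε ^ (k₁ - d) = ε ^ (-(d : ℝ)) * ε ^ (d / p) * ε ^ (-(d / q)) := by
      rw [← Real.rpow_add h0, ← Real.rpow_add h0, ← Real.rpow_add h0]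
      congr 1
      have h6 : 1 / q = 1 - 1 / p := by
        have := hpq.inv_add_inv_eq_one
        rw [one_div, one_div]
        linarith
      rw [hs, div_eq_mul_one_div (d : ℝ) q, h6]
      ring
    have h7 : 0 < ((2 * π) ^ d)⁻¹ * ε ^ (k₁ - d) := by positivity
    refine le_of_mul_le_mul_left (h.trans_eq ?_) h7
    have h8 : ((2 * π) ^ d)⁻¹ * (2 * π) ^ d = 1 := inv_mul_cancel₀ (by positivity)
    simp only [M]
    linear_combination (-(C * (∫ x, ‖schwartzInvFT d (schwartzBump d c) x‖ ^ p) ^ (1 / p) *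
      (∫ x, ‖schwartzBump d c x‖ ^ q) ^ (1 / q))) * (h5 + ε ^ s * ε ^ (k₁ - d) * h8)
  have hlim : Filter.Tendsto (fun ε : ℝ ↦ M * ε ^ s) (nhdsWithin 0 (Set.Ioi 0)) (nhds 0) := by
    have h := (Real.continuousAt_rpow_const 0 s (Or.inr (by linarith))).tendsto.const_mul M
    rw [Real.zero_rpow (by linarith), mul_zero] at h
    exact h.mono_left nhdsWithin_le_nhds
  have hle := le_of_tendsto_of_tendsto (tendsto_integral_pairingIntegrand hc k₁ hk₂).norm hlim
    (Filter.mem_of_superset (Ioc_mem_nhdsGT zero_lt_one) key)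
  exact integral_pairingIntegrand_zero_ne_zero hc k₁ hk₂ (norm_le_zero_iff.mp hle)

/-- for `1 < p ≤ 2`, the Fourier transform is bounded from the Bessel
potential space `L^p_{k₁}(ℝ^d)` to `L^p_{k₂}(ℝ^d)` if and only if
`k₁ ≥ 2d(1/p - 1/2)` and `k₂ ≤ 0`. -/
theorem stmt15 (d : ℕ) (hd : 1 ≤ d) (p : ℝ) (hp1 : 1 < p) (hp2 : p ≤ 2) (k₁ k₂ : ℝ) :
    (∃ C > (0 : ℝ), ∀ f : SchwartzMap (E d) ℂ,
        (∫ x : E d, ‖bessel d k₂ (FT d (⇑f)) x‖ ^ p) ^ (1 / p) ≤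
          C * (∫ x : E d, ‖bessel d k₁ (⇑f) x‖ ^ p) ^ (1 / p)) ↔
      (2 * d * (1 / p - 1 / 2) ≤ k₁ ∧ k₂ ≤ 0) := by
  have hB : ∀ f : 𝓢(E d, ℂ), bessel d k₂ (FT d f) = schwartzBessel d k₂ (schwartzFT d f) :=
    fun f ↦ by rw [← coe_schwartzFT, coe_schwartzBessel]
  simp only [hB, ← coe_schwartzBessel]
  constructor
  · rintro ⟨C, -, hC⟩
    have hk₂ := nonpos_of_bessel_fourier_bound hd hp1 hC
    exact ⟨le_of_bessel_fourier_bound hd hp1 hk₂ hC, hk₂⟩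
  · rintro ⟨hk₁, hk₂⟩
    exact exists_bessel_fourier_bound hd hp1 hp2 hk₁ hk₂
end
end
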